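/- arXiv:0909.5199 — 7 statements merged into one kernel-verified Lean document; each statement's English description precedes it below -/
import Mathlib

section
/- For every n ≥ 0, the number of cycle-up-down permutations of [n] equals E_{n+1}, the number of up-down permutations of [n+1]. (The empty permutation of [0] counts as cycle-up-down, matching E_1 = 1.) -/
open Equiv Finset

/-- `π` is an up-down permutation of `[n]` in one-line notation (0-indexed):
`π 0 < π 1 > π 2 < π 3 > ⋯`. -/
def IsUpDownPerm {n : ℕ} (π : Equiv.Perm (Fin n)) : Prop :=
  ∀ i j : Fin n, (j : ℕ) = (i : ℕ) + 1 →
    (((i : ℕ) % 2 = 0 → π i < π j) ∧ ((i : ℕ) % 2 = 1 → π j < π i))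

/-- The Euler number `E n`: the number of up-down permutations of `[n]`. -/
noncomputable def eulerE (n : ℕ) : ℕ :=
  Nat.card {π : Equiv.Perm (Fin n) // IsUpDownPerm π}

/-- The length of the cycle of `π` containing `x` (fixed points give length `1`). -/
noncomputable def cycLen {n : ℕ} (π : Equiv.Perm (Fin n)) (x : Fin n) : ℕ :=
  Function.minimalPeriod (⇑π) x

/-- `x` is the smallest element of its cycle of `π`. -/
def IsOrbitMin {n : ℕ} (π : Equiv.Perm (Fin n)) (x : Fin n) : Prop :=
  ∀ k : ℕ, x ≤ (π ^ k) x

/-- The cyclic representation `x, π x, π² x, …` (of length `cycLen π x`) of the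
cycle of `π` containing `x` has the up-down pattern `x < π x > π² x < ⋯`. -/
def CycleUpDownAt {n : ℕ} (π : Equiv.Perm (Fin n)) (x : Fin n) : Prop :=
  ∀ i : ℕ, i + 1 < cycLen π x →
    ((i % 2 = 0 → (π ^ i) x < (π ^ (i + 1)) x) ∧
     (i % 2 = 1 → (π ^ (i + 1)) x < (π ^ i) x))

/-- `π` is cycle-up-down: every cycle, written in standard form
(starting at its smallest element), is up-down. -/
def IsCUD {n : ℕ} (π : Equiv.Perm (Fin n)) : Prop :=
  ∀ x : Fin n, IsOrbitMin π x → CycleUpDownAt π x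

/-- The number of cycles of `π` (fixed points included), counted via the
smallest elements of the cycles. -/
noncomputable def cycleCount {n : ℕ} (π : Equiv.Perm (Fin n)) : ℕ :=
  Nat.card {x : Fin n // IsOrbitMin π x}

/-- The number of cycles of `π` of even length. -/
noncomputable def evenCycleCount {n : ℕ} (π : Equiv.Perm (Fin n)) : ℕ :=
  Nat.card {x : Fin n // IsOrbitMin π x ∧ Even (cycLen π x)}

/-- The number of cycles of `π` of odd length. -/
noncomputable def oddCycleCount {n : ℕ} (π : Equiv.Perm (Fin n)) : ℕ :=
  Nat.card {x : Fin n // IsOrbitMin π x ∧ Odd (cycLen π x)}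

/-- The number of excedances of `π`. -/
noncomputable def excCount {n : ℕ} (π : Equiv.Perm (Fin n)) : ℕ :=
  Nat.card {i : Fin n // i < π i}

/-- The number of left-to-right minima of `π` (in one-line notation). -/
noncomputable def lrmCount {n : ℕ} (π : Equiv.Perm (Fin n)) : ℕ :=
  Nat.card {i : Fin n // ∀ j : Fin n, j < i → π i < π j}

/-- The number of extreme elements of `π`: entries in position `≥ 2`
(0-indexed: position `≥ 1`) that are left-to-right minima or maxima. -/
noncomputable def extrCount {n : ℕ} (π : Equiv.Perm (Fin n)) : ℕ :=
  Nat.card {i : Fin n // (i : ℕ) ≠ 0 ∧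
    ((∀ j : Fin n, j < i → π i < π j) ∨ (∀ j : Fin n, j < i → π j < π i))}

/-- Auxiliary (fuel-based) computation of the length of the `s`-driven
min/max subsequence of a list: at step `j` (0-indexed) pick the minimum of the
remaining list if `s j = true`, its maximum if `s j = false`, and continue with
the part of the list strictly to the right of the picked entry. -/
def msLenAux : ℕ → (ℕ → Bool) → List ℕ → ℕ
  | 0, _, _ => 0
  | _, _, [] => 0
  | fuel + 1, s, a :: t =>
      let l := a :: t
      let v := if s 0 then l.foldr min a else l.foldr max a
      1 + msLenAux fuel (fun i => s (i + 1)) ((l.dropWhile (· != v)).tail)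

/-- The length of the `s`-driven min/max subsequence of a list
(`s j = true` means minimum at step `j`, `s j = false` means maximum). -/
def msLen (s : ℕ → Bool) (l : List ℕ) : ℕ := msLenAux l.length s l

/-- The one-line notation of `π` as a list of natural numbers. -/
def oneLine {n : ℕ} (π : Equiv.Perm (Fin n)) : List ℕ :=
  List.ofFn fun i => ((π i : ℕ))

/-- The statistic `m_s(π)`: the length of the `s`-driven min/max subsequence
of the one-line notation of `π`. -/
def msStat {n : ℕ} (s : ℕ → Bool) (π : Equiv.Perm (Fin n)) : ℕ :=
  msLen s (oneLine π)

/-- `st π`: the length of the min-max sequence of `π` (alternately take the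
minimum, the maximum, the minimum, … of what remains to the right). -/
def stStat {n : ℕ} (π : Equiv.Perm (Fin n)) : ℕ :=
  msStat (fun i => i % 2 == 0) π

/-- `π` is a cyclic permutation: it consists of a single cycle. -/
def IsCyclicPerm {n : ℕ} (π : Equiv.Perm (Fin n)) : Prop :=
  ∀ x y : Fin n, π.SameCycle x y

/-- The number of up-down cycles of `π` having length `k`. -/
noncomputable def udLenCount {n : ℕ} (π : Equiv.Perm (Fin n)) (k : ℕ) : ℕ :=
  Nat.card {x : Fin n // IsOrbitMin π x ∧ cycLen π x = k ∧ CycleUpDownAt π x}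

/-- `ud π`: the number of up-down cycles of `π`. -/
noncomputable def udCount {n : ℕ} (π : Equiv.Perm (Fin n)) : ℕ :=
  Nat.card {x : Fin n // IsOrbitMin π x ∧ CycleUpDownAt π x}

/-- `r n`: the number of permutations of `[n]` having no up-down cycles. -/
noncomputable def noUDCyclesCount (n : ℕ) : ℕ :=
  Nat.card {π : Equiv.Perm (Fin n) // ∀ x : Fin n, IsOrbitMin π x → ¬ CycleUpDownAt π x}

namespace CUDAux

def rel (up : Bool) {n : ℕ} (a b : Fin n) : Prop := if up then a < b else b < a

def alt (up : Bool) (i : ℕ) {n : ℕ} (a b : Fin n) : Prop :=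
  (i % 2 = 0 → rel up a b) ∧ (i % 2 = 1 → rel (!up) a b)

lemma alt_zero (up : Bool) {n : ℕ} (a b : Fin n) : alt up 0 a b ↔ rel up a b := by
  simp [alt]

lemma alt_succ (up : Bool) (i : ℕ) {n : ℕ} (a b : Fin n) :
    alt up (i + 1) a b ↔ alt (!up) i a b := by
  unfold alt
  rcases Nat.mod_two_eq_zero_or_one i with h | h
  · have : (i + 1) % 2 = 1 := by omega
    simp [h, this]
  · have : (i + 1) % 2 = 0 := by omega
    simp [h, this]

lemma rel_succAbove (up : Bool) {n : ℕ} (c : Fin (n + 1)) (a b : Fin n) :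
    rel up (c.succAbove a) (c.succAbove b) ↔ rel up a b := by
  unfold rel
  split <;> simp [Fin.succAbove_lt_succAbove_iff]

lemma alt_succAbove (up : Bool) (i : ℕ) {n : ℕ} (c : Fin (n + 1)) (a b : Fin n) :
    alt up i (c.succAbove a) (c.succAbove b) ↔ alt up i a b := by
  simp [alt, rel_succAbove]

/-- alternating one-line -/
def AltP (up : Bool) {n : ℕ} (π : Perm (Fin n)) : Prop :=
  ∀ i j : Fin n, (j : ℕ) = (i : ℕ) + 1 → alt up i (π i) (π j)

lemma isUpDown_iff {n : ℕ} (π : Perm (Fin n)) : IsUpDownPerm π ↔ AltP true π := by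
  simp [IsUpDownPerm, AltP, alt, rel]

def U : ℕ → ℕ → ℕ
  | 0, _ => 1
  | r + 1, j => ∑ i ∈ range j, U r (r - i)

def K {n : ℕ} (c : Fin (n + 1)) (τ : Perm (Fin n)) : Perm (Fin (n + 1)) :=
  (finSuccEquiv' 0).trans ((optionCongr τ).trans (finSuccEquiv' c).symm)

lemma K_zero {n : ℕ} (c : Fin (n + 1)) (τ : Perm (Fin n)) : K c τ 0 = c := by
  simp [K, finSuccEquiv'_at]

lemma K_succ {n : ℕ} (c : Fin (n + 1)) (τ : Perm (Fin n)) (i : Fin n) :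
    K c τ i.succ = c.succAbove (τ i) := by
  have : finSuccEquiv' 0 i.succ = some i := by
    rw [← Fin.succAbove_zero]; exact finSuccEquiv'_succAbove 0 i
  simp [K, this]

lemma K_bij (n : ℕ) : Function.Bijective
    (fun p : Fin (n + 1) × Perm (Fin n) => K p.1 p.2) := by
  rw [Fintype.bijective_iff_injective_and_card]
  constructor
  · rintro ⟨c, τ⟩ ⟨c', τ'⟩ h
    simp only at h
    have h0 : c = c' := by rw [← K_zero c τ, h, K_zero]
    subst h0
    congr 1
    ext i : 1
    have := congrArg (fun f => f i.succ) h
    simp only [K_succ] at this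
    exact Fin.succAbove_right_injective this
  · simp [Fintype.card_perm, Nat.factorial_succ]

lemma AltP_K (up : Bool) {n : ℕ} (c : Fin (n + 2)) (τ : Perm (Fin (n + 1))) :
    AltP up (K c τ) ↔ rel up c (c.succAbove (τ 0)) ∧ AltP (!up) τ := by
  constructor
  · intro h
    constructor
    · have := h 0 (Fin.succ 0) (by simp)
      rw [K_zero, K_succ] at this
      simpa [alt_zero] using this
    · intro i j hij
      have := h i.succ j.succ (by simp [hij])
      rw [K_succ, K_succ, alt_succAbove, Fin.val_succ, alt_succ] at this
      exact this
  · rintro ⟨h0, h⟩ i j hij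
    obtain ⟨j, rfl⟩ := Fin.exists_succ_eq.2 (show j ≠ 0 by rintro rfl; simp at hij)
    refine Fin.cases ?_ (fun i => ?_) i (motive := fun i => (j.succ : ℕ) = (i : ℕ) + 1 → alt up i (K c τ i) (K c τ j.succ)) hij
    · intro hj
      have : j = 0 := by ext; simpa using hj
      subst this
      rw [K_zero, K_succ]; simpa [alt_zero] using h0
    · intro hj
      rw [K_succ, K_succ, alt_succAbove, Fin.val_succ, alt_succ]
      exact h i j (by simpa using hj)

open Classical in
noncomputable def u (up : Bool) (n : ℕ) (c : Fin (n + 1)) : ℕ :=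
  ∑ τ : Perm (Fin (n + 1)), if τ 0 = c ∧ AltP up τ then 1 else 0

open Classical in
lemma u_succ (up : Bool) (n : ℕ) (c : Fin (n + 2)) :
    u up (n + 1) c = ∑ b : Fin (n + 1), if rel up c (c.succAbove b) then u (!up) n b else 0 := by
  unfold u
  rw [← (Equiv.ofBijective _ (K_bij (n + 1))).sum_comp, Fintype.sum_prod_type]
  rw [Finset.sum_eq_single c]
  · simp only [Equiv.ofBijective_apply, K_zero, AltP_K, true_and]
    have : ∀ b : Fin (n + 1), (if rel up c (c.succAbove b) then
        ∑ τ : Perm (Fin (n + 1)), (if τ 0 = b ∧ AltP (!up) τ then 1 else 0) else 0) =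
        ∑ τ : Perm (Fin (n + 1)), if τ 0 = b then
          (if rel up c (c.succAbove (τ 0)) ∧ AltP (!up) τ then 1 else 0) else 0 := by
      intro b
      split_ifs with h
      · refine Finset.sum_congr rfl fun τ _ => ?_
        by_cases hb : τ 0 = b <;> simp [hb, h]
      · symm
        refine Finset.sum_eq_zero fun τ _ => ?_
        by_cases hb : τ 0 = b <;> simp [hb, h]
    simp only [this]
    rw [Finset.sum_comm]
    simp
  · intro b _ hb
    simp [K_zero, hb]
  · simp

lemma sum_lt {n : ℕ} (f : ℕ → ℕ) (c : ℕ) (hc : c ≤ n) :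
    (∑ b : Fin n, if (b : ℕ) < c then f b else 0) = ∑ i ∈ range c, f i := by
  rw [Fin.sum_univ_eq_sum_range (fun b => if b < c then f b else 0), ← Finset.sum_filter]
  congr 1
  ext x; simp; omega

lemma sum_ge {n : ℕ} (f : ℕ → ℕ) (c : ℕ) :
    (∑ b : Fin n, if c ≤ (b : ℕ) then f b else 0) = ∑ i ∈ range (n - c), f (n - 1 - i) := by
  rw [← sum_lt (n := n) (fun i => f (n - 1 - i)) _ (Nat.sub_le _ _), ← Equiv.sum_comp Fin.revPerm]
  refine Finset.sum_congr rfl fun b _ => ?_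
  have hb := b.2
  simp only [Fin.revPerm_apply, Fin.val_rev]
  have : (c ≤ n - (b + 1)) ↔ (b : ℕ) < n - c := by omega
  simp only [this]
  congr 2
  omega

lemma rel_true {n : ℕ} (c : Fin (n + 1)) (b : Fin n) :
    rel true c (c.succAbove b) ↔ (c : ℕ) ≤ b := by
  simp [rel, Fin.lt_succAbove_iff_le_castSucc, Fin.le_def]

lemma rel_false {n : ℕ} (c : Fin (n + 1)) (b : Fin n) :
    rel false c (c.succAbove b) ↔ (b : ℕ) < c := by
  simp only [rel, Fin.succAbove_lt_iff_castSucc_lt]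
  rfl

lemma u_eq (n : ℕ) : ∀ c : Fin (n + 1), u true n c = U n (n - c) ∧ u false n c = U n c := by
  classical
  induction n with
  | zero =>
    intro c
    have hc : c = 0 := Fin.fin_one_eq_zero c
    have : ∀ (up) (τ : Perm (Fin 1)), AltP up τ := by
      intro up τ i j hij; omega
    have h2 : ∀ (τ : Perm (Fin 1)), τ 0 = 0 := fun τ => Subsingleton.elim _ _
    simp [u, U, hc, this, h2]
  | succ n ih =>
    intro c
    constructor
    · rw [u_succ]
      simp only [rel_true, Bool.not_true, fun b => (ih b).2]
      rw [sum_ge (fun b => U n b)]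
      simp [U]
    · rw [u_succ]
      simp only [rel_false, Bool.not_false, fun b => (ih b).1]
      rw [sum_lt (fun b => U n (n - b)) _ (by omega)]
      simp [U]

lemma eulerE_eq (n : ℕ) : eulerE (n + 1) = U (n + 1) (n + 1) := by
  classical
  unfold eulerE
  rw [Nat.card_eq_fintype_card, Fintype.card_subtype, Finset.card_filter]
  have : ∑ c : Fin (n + 1), u true n c = U (n + 1) (n + 1) := by
    simp only [fun c => (u_eq n c).1, U]
    rw [Fin.sum_univ_eq_sum_range (fun b => U n (n - b))]
  rw [← this]
  unfold u
  rw [Finset.sum_comm]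
  refine Finset.sum_congr rfl fun τ _ => ?_
  simp only [isUpDown_iff, ite_and]
  simp

/-! cycles -/

def Good (up : Bool) {n : ℕ} (σ : Perm (Fin n)) (c : Fin n) : Prop :=
  (∀ i : ℕ, i + 1 < cycLen σ c → alt up i ((σ ^ i) c) ((σ ^ (i + 1)) c)) ∧
  ∀ x, (∀ k : ℕ, (σ ^ k) x ≠ c) → IsOrbitMin σ x → CycleUpDownAt σ x

lemma cud_iff {n : ℕ} (σ : Perm (Fin n)) (x : Fin n) : CycleUpDownAt σ x ↔
    (∀ i : ℕ, i + 1 < cycLen σ x → alt true i ((σ ^ i) x) ((σ ^ (i + 1)) x)) := by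
  simp [CycleUpDownAt, alt, rel]

lemma isCUD_iff {n : ℕ} (σ : Perm (Fin (n + 1))) : IsCUD σ ↔ Good true σ 0 := by
  constructor
  · intro h
    exact ⟨(cud_iff σ 0).1 (h 0 fun k => Fin.zero_le _), fun x _ hx => h x hx⟩
  · rintro ⟨h1, h2⟩ x hx
    by_cases hk : ∀ k : ℕ, (σ ^ k) x ≠ 0
    · exact h2 x hk hx
    · push Not at hk
      obtain ⟨k, hk⟩ := hk
      have := hx k
      rw [hk] at this
      have : x = 0 := by simpa using this
      subst this
      exact (cud_iff σ 0).2 h1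

def G {n : ℕ} (c : Fin (n + 1)) : Option (Fin n) × Perm (Fin n) ≃ Perm (Fin (n + 1)) :=
  Perm.decomposeOption.symm.trans (Equiv.permCongr (finSuccEquiv' c).symm)

lemma G_none_c {n : ℕ} (c : Fin (n + 1)) (τ : Perm (Fin n)) : G c (none, τ) c = c := by
  simp [G, Equiv.permCongr_apply]

lemma G_none_e {n : ℕ} (c : Fin (n + 1)) (τ : Perm (Fin n)) (x : Fin n) :
    G c (none, τ) (c.succAbove x) = c.succAbove (τ x) := by
  simp [G, Equiv.permCongr_apply]

lemma G_some_c {n : ℕ} (c : Fin (n + 1)) (b) (τ : Perm (Fin n)) :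
    G c (some b, τ) c = c.succAbove b := by
  simp [G, Equiv.permCongr_apply]

lemma G_some_e {n : ℕ} (c : Fin (n + 1)) (b) (τ : Perm (Fin n)) (x : Fin n) :
    G c (some b, τ) (c.succAbove x) = if τ x = b then c else c.succAbove (τ x) := by
  simp only [G, Equiv.permCongr_apply]
  split_ifs with h
  · simp [h]
  · simp [Equiv.swap_apply_of_ne_of_ne, h]

section
variable {n : ℕ} {c : Fin (n + 1)} {σ : Perm (Fin (n + 1))} {τ : Perm (Fin n)}

lemma transfer {y : Fin n} (h : ∀ k : ℕ, (σ ^ k) (c.succAbove y) = c.succAbove ((τ ^ k) y)) :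
    (IsOrbitMin σ (c.succAbove y) → CycleUpDownAt σ (c.succAbove y)) ↔
    (IsOrbitMin τ y → CycleUpDownAt τ y) := by
  have h1 : IsOrbitMin σ (c.succAbove y) ↔ IsOrbitMin τ y := by
    simp [IsOrbitMin, h]
  have h2 : cycLen σ (c.succAbove y) = cycLen τ y := by
    unfold cycLen
    rw [Function.minimalPeriod_eq_minimalPeriod_iff]
    intro k
    simp only [Function.IsPeriodicPt, Function.IsFixedPt, ← Perm.coe_pow, h]
    simp
  rw [h1, cud_iff, cud_iff, h2]
  simp only [h, alt_succAbove]

lemma good_none (up : Bool) (hc : σ c = c)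
    (he : ∀ x, σ (c.succAbove x) = c.succAbove (τ x)) : Good up σ c ↔ IsCUD τ := by
  have h : ∀ y, ∀ k : ℕ, (σ ^ k) (c.succAbove y) = c.succAbove ((τ ^ k) y) := by
    intro y k
    induction k with
    | zero => simp
    | succ k ih => rw [pow_succ', pow_succ', Perm.mul_apply, Perm.mul_apply, ih, he]
  have hL : cycLen σ c = 1 := Function.minimalPeriod_eq_one_iff_isFixedPt.2 hc
  unfold Good
  rw [hL]
  constructor
  · rintro ⟨-, h2⟩ y
    exact (transfer (h y)).1 (h2 _ fun k => by rw [h]; exact Fin.succAbove_ne _ _)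
  · intro h2
    refine ⟨fun i hi => by omega, fun x hx => ?_⟩
    obtain ⟨y, rfl⟩ := Fin.exists_succAbove_eq (x := x) (y := c) (hx 0)
    exact (transfer (h y)).2 (h2 y)

lemma good_some (up : Bool) (b : Fin n) (hc : σ c = c.succAbove b)
    (he : ∀ x, σ (c.succAbove x) = if τ x = b then c else c.succAbove (τ x)) :
    Good up σ c ↔ rel up c (c.succAbove b) ∧ Good (!up) τ b := by
  have hpos : 0 < cycLen τ b := by
    apply Function.minimalPeriod_pos_of_mem_periodicPts
    exact Function.Injective.mem_periodicPts τ.injective b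
  have hper : (τ ^ cycLen τ b) b = b := by
    rw [Perm.coe_pow]; exact Function.iterate_minimalPeriod
  have hne : ∀ k, 0 < k → k < cycLen τ b → (τ ^ k) b ≠ b := by
    intro k h0 hk h
    rw [Perm.coe_pow] at h
    exact Function.not_isPeriodicPt_of_pos_of_lt_minimalPeriod h0.ne' hk h
  have hpow : ∀ i, i < cycLen τ b → (σ ^ (i + 1)) c = c.succAbove ((τ ^ i) b) := by
    intro i
    induction i with
    | zero => intro _; simp [hc]
    | succ i ih =>
      intro hi
      rw [pow_succ', Perm.mul_apply, ih (by omega), he, ← Perm.mul_apply, ← pow_succ',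
        if_neg (hne _ (by omega) hi)]
  have hL : cycLen σ c = cycLen τ b + 1 := by
    apply le_antisymm
    · apply Function.IsPeriodicPt.minimalPeriod_le (by omega)
      unfold Function.IsPeriodicPt Function.IsFixedPt
      rw [← Perm.coe_pow]
      obtain ⟨m, hm⟩ : ∃ m, cycLen τ b = m + 1 := ⟨cycLen τ b - 1, by omega⟩
      rw [hm, pow_succ', Perm.mul_apply, hpow m (by omega), he, ← Perm.mul_apply, ← pow_succ',
        ← hm, if_pos hper]
    · by_contra hlt
      have hpos' : 0 < cycLen σ c := by
        apply Function.minimalPeriod_pos_of_mem_periodicPts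
        exact Function.Injective.mem_periodicPts σ.injective c
      obtain ⟨m, hm⟩ : ∃ m, cycLen σ c = m + 1 := ⟨cycLen σ c - 1, by omega⟩
      have h1 : (σ ^ cycLen σ c) c = c := by
        rw [Perm.coe_pow]; exact Function.iterate_minimalPeriod
      rw [hm, hpow m (by omega)] at h1
      exact Fin.succAbove_ne _ _ h1
  have hA : (∀ i : ℕ, i + 1 < cycLen σ c → alt up i ((σ ^ i) c) ((σ ^ (i + 1)) c)) ↔
      rel up c (c.succAbove b) ∧
      (∀ i : ℕ, i + 1 < cycLen τ b → alt (!up) i ((τ ^ i) b) ((τ ^ (i + 1)) b)) := by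
    rw [hL]
    constructor
    · intro h
      refine ⟨?_, fun i hi => ?_⟩
      · have := h 0 (by omega)
        rw [hpow 0 hpos] at this
        simpa [alt_zero] using this
      · have := h (i + 1) (by omega)
        rwa [hpow i (by omega), hpow (i + 1) (by omega), alt_succAbove, alt_succ] at this
    · rintro ⟨h0, h⟩ i hi
      cases i with
      | zero =>
        rw [hpow 0 hpos]
        simpa [alt_zero] using h0
      | succ i =>
        rw [hpow i (by omega), hpow (i + 1) (by omega), alt_succAbove, alt_succ]
        exact h i (by omega)
  have hB1 : ∀ y, (∀ k : ℕ, (τ ^ k) y ≠ b) →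
      ∀ k : ℕ, (σ ^ k) (c.succAbove y) = c.succAbove ((τ ^ k) y) := by
    intro y hy k
    induction k with
    | zero => simp
    | succ k ih =>
      rw [pow_succ', Perm.mul_apply, ih, he, ← Perm.mul_apply, ← pow_succ', if_neg (hy _)]
  have hB2 : ∀ y, (∀ k : ℕ, (σ ^ k) (c.succAbove y) ≠ c) → ∀ k : ℕ, (τ ^ k) y ≠ b := by
    intro y hy
    have h1 : ∀ k : ℕ, (σ ^ k) (c.succAbove y) = c.succAbove ((τ ^ k) y) ∧ (τ ^ (k + 1)) y ≠ b := by
      have h2 : ∀ k : ℕ, (σ ^ k) (c.succAbove y) = c.succAbove ((τ ^ k) y) →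
          (τ ^ (k + 1)) y ≠ b := by
        intro k hk hb
        apply hy (k + 1)
        rw [pow_succ', Perm.mul_apply, hk, he, ← Perm.mul_apply, ← pow_succ', if_pos hb]
      intro k
      induction k with
      | zero => exact ⟨by simp, h2 0 (by simp)⟩
      | succ k ih =>
        have : (σ ^ (k + 1)) (c.succAbove y) = c.succAbove ((τ ^ (k + 1)) y) := by
          rw [pow_succ', Perm.mul_apply, ih.1, he, ← Perm.mul_apply, ← pow_succ', if_neg ih.2]
        exact ⟨this, h2 _ this⟩
    intro k
    cases k with
    | succ k => exact (h1 k).2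
    | zero =>
      intro hb
      have hb : y = b := by simpa using hb
      subst hb
      obtain ⟨m, hm⟩ : ∃ m, cycLen τ y = m + 1 := ⟨cycLen τ y - 1, by omega⟩
      exact (h1 m).2 (hm ▸ hper)
  unfold Good
  rw [hA, and_assoc]
  refine and_congr_right fun _ => and_congr_right fun _ => ?_
  constructor
  · intro h y hy
    refine (transfer (hB1 y hy)).1 (h _ fun k => ?_)
    rw [hB1 y hy]; exact Fin.succAbove_ne _ _
  · intro h x hx
    obtain ⟨y, rfl⟩ := Fin.exists_succAbove_eq (x := x) (y := c) (hx 0)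
    have := hB2 y hx
    exact (transfer (hB1 y this)).2 (h y this)

end

open Classical in
noncomputable def C (n : ℕ) : ℕ := ∑ σ : Perm (Fin n), if IsCUD σ then 1 else 0

open Classical in
noncomputable def P (up : Bool) (n : ℕ) (c : Fin (n + 1)) : ℕ :=
  ∑ σ : Perm (Fin (n + 1)), if Good up σ c then 1 else 0

lemma C_succ (n : ℕ) : C (n + 1) = P true n 0 := by
  unfold C P
  refine Finset.sum_congr rfl fun σ _ => ?_
  by_cases h : IsCUD σ
  · rw [if_pos h, if_pos ((isCUD_iff σ).1 h)]
  · rw [if_neg h, if_neg (fun h' => h ((isCUD_iff σ).2 h'))]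

lemma C_zero : C 0 = 1 := by
  have : ∀ σ : Perm (Fin 0), IsCUD σ := fun σ x => x.elim0
  simp [C, this]

lemma P_zero (up : Bool) (c : Fin 1) : P up 0 c = C 0 := by
  classical
  unfold P
  rw [← (G c).sum_comp, Fintype.sum_prod_type, Fintype.sum_option]
  simp only [fun τ => good_none up (G_none_c c τ) (G_none_e c τ)]
  simp [C]

open Classical in
lemma P_succ (up : Bool) (n : ℕ) (c : Fin (n + 2)) : P up (n + 1) c = C (n + 1) +
    ∑ b : Fin (n + 1), if rel up c (c.succAbove b) then P (!up) n b else 0 := by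
  unfold P
  rw [← (G c).sum_comp, Fintype.sum_prod_type, Fintype.sum_option]
  simp only [fun τ => good_none up (G_none_c c τ) (G_none_e c τ),
    fun b τ => good_some up b (G_some_c c b τ) (G_some_e c b τ)]
  congr 1
  refine Finset.sum_congr rfl fun b _ => ?_
  split_ifs with h <;> simp [h]

lemma U_zero (n : ℕ) : U (n + 1) 0 = 0 := by simp [U]

lemma U_step (n c : ℕ) : U (n + 1) (c + 1) = U n n + ∑ i ∈ range c, U n (n - (i + 1)) := by
  simp only [U]
  rw [Finset.sum_range_succ']
  simp [add_comm]

lemma C_P (n : ℕ) : C n = U (n + 1) (n + 1) ∧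
    ∀ c : Fin (n + 1), P true n c = U (n + 2) (n - c + 1) ∧ P false n c = U (n + 2) (c + 1) := by
  classical
  induction n with
  | zero =>
    refine ⟨by simp [C_zero, U], fun c => ?_⟩
    have hc : c = 0 := Fin.fin_one_eq_zero c
    subst hc
    simp [P_zero, C_zero, U]
  | succ n ih =>
    obtain ⟨_, ih⟩ := ih
    have hC : C (n + 1) = U (n + 2) (n + 2) := by
      rw [C_succ, (ih 0).1]
      conv_rhs => rw [U, Finset.sum_range_succ]
      simp [U]
    refine ⟨hC, fun c => ⟨?_, ?_⟩⟩
    · rw [P_succ, U_step, hC]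
      simp only [rel_true, Bool.not_true, fun b => (ih b).2]
      rw [sum_ge (fun b => U (n + 2) (b + 1))]
      congr 1
      refine Finset.sum_congr rfl fun i hi => ?_
      have := Finset.mem_range.1 hi
      congr 1
      omega
    · rw [P_succ, U_step, hC]
      simp only [rel_false, Bool.not_false, fun b => (ih b).1]
      rw [sum_lt (fun b => U (n + 2) (n - b + 1)) _ (by omega)]
      congr 1
      refine Finset.sum_congr rfl fun i hi => ?_
      have := Finset.mem_range.1 hi
      congr 1
      omega

end CUDAux

/-- CUD permutations of `[n]` are counted by `E (n+1)`. -/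
theorem stmt0 (n : ℕ) :
    Nat.card {π : Equiv.Perm (Fin n) // IsCUD π} = eulerE (n + 1) := by
  classical
  rw [CUDAux.eulerE_eq, ← (CUDAux.C_P n).1, Nat.card_eq_fintype_card, Fintype.card_subtype,
    Finset.card_filter, CUDAux.C]
end

section
/- For every m ≥ 0, the number of cycle-up-down permutations of [2m] all of whose cycles have even length equals E_{2m}, the number of up-down permutations of [2m]. -/
open Equiv Finset

noncomputable def fM {n : ℕ} (σ : Equiv.Perm (Fin n)) (i : Fin n) : Fin n :=
  (Finset.Iic i).inf' ⟨i, Finset.mem_Iic.2 le_rfl⟩ σ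

lemma fM_le {n : ℕ} (σ : Equiv.Perm (Fin n)) {i j : Fin n} (h : j ≤ i) : fM σ i ≤ σ j :=
  Finset.inf'_le _ (Finset.mem_Iic.2 h)

lemma fM_mem {n : ℕ} (σ : Equiv.Perm (Fin n)) (i : Fin n) : ∃ k, k ≤ i ∧ fM σ i = σ k := by
  obtain ⟨k, hk, h⟩ := Finset.exists_mem_eq_inf' (s := Finset.Iic i)
    ⟨i, Finset.mem_Iic.2 le_rfl⟩ σ
  exact ⟨k, Finset.mem_Iic.1 hk, h⟩

lemma fM_anti {n : ℕ} (σ : Equiv.Perm (Fin n)) {i j : Fin n} (h : i ≤ j) : fM σ j ≤ fM σ i := by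
  obtain ⟨k, hk, e⟩ := fM_mem σ i
  rw [e]; exact fM_le σ (hk.trans h)

noncomputable def fg {n : ℕ} (σ : Equiv.Perm (Fin n)) (i : Fin n) : Fin n :=
  if h : (i : ℕ) + 1 < n then
    if fM σ i < σ ⟨i + 1, h⟩ then σ ⟨i + 1, h⟩ else fM σ i
  else fM σ i

lemma fg_cases {n : ℕ} (σ : Equiv.Perm (Fin n)) (i : Fin n) :
    (∃ h : (i : ℕ) + 1 < n, fM σ i < σ ⟨i + 1, h⟩ ∧ fg σ i = σ ⟨i + 1, h⟩) ∨
    ((∀ h : (i : ℕ) + 1 < n, σ ⟨i + 1, h⟩ < fM σ i) ∧ fg σ i = fM σ i) := by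
  unfold fg
  split_ifs with h h'
  · exact Or.inl ⟨h, h', rfl⟩
  · refine Or.inr ⟨fun _ => lt_of_le_of_ne (not_lt.1 h') ?_, rfl⟩
    obtain ⟨k, hk, e⟩ := fM_mem σ i
    rw [e]
    intro he
    have := σ.injective he
    subst this
    have : (i : ℕ) + 1 ≤ i := hk
    omega
  · exact Or.inr ⟨fun h' => absurd h' h, rfl⟩

lemma fg_ne {n : ℕ} (σ : Equiv.Perm (Fin n)) {i j : Fin n} (hij : i < j) : fg σ i ≠ fg σ j := by
  intro he
  have hle := fM_anti σ hij.le
  rcases fg_cases σ i with ⟨h, h1, h2⟩ | ⟨h1, h2⟩ <;>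
  rcases fg_cases σ j with ⟨h', h1', h2'⟩ | ⟨h1', h2'⟩
  · rw [h2, h2'] at he
    have := congrArg Fin.val (σ.injective he)
    have : (i : ℕ) < j := hij
    simp at *
    omega
  · rw [h2, h2'] at he
    rw [he] at h1
    exact absurd h1 (not_lt.2 hle)
  · rw [h2, h2'] at he
    obtain ⟨k, hk, e⟩ := fM_mem σ i
    rw [e] at he
    have := congrArg Fin.val (σ.injective he)
    have h3 : (i : ℕ) < j := hij
    have h4 : (k : ℕ) ≤ i := hk
    simp at this
    omega
  · rw [h2, h2'] at he
    have h3 : (i : ℕ) < j := hij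
    have h4 : (i : ℕ) + 1 < n := by omega
    have h5 := h1 h4
    have h6 : fM σ j ≤ σ ⟨i + 1, h4⟩ := fM_le σ (show (i : ℕ) + 1 ≤ j by omega)
    rw [he] at h5
    exact absurd h5 (not_lt.2 h6)

lemma fg_inj {n : ℕ} (σ : Equiv.Perm (Fin n)) : Function.Injective (fg σ) := by
  intro i j h
  rcases lt_trichotomy i j with h' | h' | h'
  · exact absurd h (fg_ne σ h')
  · exact h'
  · exact absurd h.symm (fg_ne σ h')

noncomputable def fF {n : ℕ} (σ : Equiv.Perm (Fin n)) : Equiv.Perm (Fin n) :=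
  σ⁻¹.trans (Equiv.ofBijective (fg σ) (Finite.injective_iff_bijective.1 (fg_inj σ)))

lemma fF_apply {n : ℕ} (σ : Equiv.Perm (Fin n)) (i : Fin n) : fF σ (σ i) = fg σ i := by
  simp [fF]

lemma fM_le_of {n : ℕ} (σ τ : Equiv.Perm (Fin n)) (i : Fin n) (h : ∀ j, i < j → σ j = τ j) :
    fM σ i ≤ fM τ i := by
  obtain ⟨k, hk, e⟩ := fM_mem τ i
  rw [e]
  obtain ⟨j, hj⟩ := σ.surjective (τ k)
  rw [← hj]
  apply fM_le
  by_contra hlt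
  rw [not_le] at hlt
  rw [h j hlt] at hj
  have := τ.injective hj
  subst this
  exact absurd hk (not_le.2 hlt)

lemma fF_inj {n : ℕ} : Function.Injective (fF (n := n)) := by
  intro σ τ h
  have key : ∀ d : ℕ, ∀ i : Fin n, n - (i : ℕ) = d → σ i = τ i := by
    intro d
    induction d using Nat.strong_induction_on with
    | _ d ih =>
      intro i hi
      have hj : ∀ j, i < j → σ j = τ j := by
        intro j hij
        have h3 : (i : ℕ) < j := hij
        exact ih (n - j) (by omega) j rfl
      have hM : fM σ i = fM τ i := le_antisymm (fM_le_of σ τ i hj)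
        (fM_le_of τ σ i fun j hij => (hj j hij).symm)
      have hg : fg σ i = fg τ i := by
        unfold fg
        rw [hM]
        split_ifs with h1 h2 h3 h3
        · exact hj _ (show (i : ℕ) < i + 1 by omega)
        · exact absurd (hj ⟨i + 1, h1⟩ (show (i : ℕ) < i + 1 by omega) ▸ h2) h3
        · exact absurd ((hj ⟨i + 1, h1⟩ (show (i : ℕ) < i + 1 by omega)).symm ▸ h3) h2
        · rfl
        · rfl
      rw [← fF_apply, ← fF_apply, h] at hg
      exact (fF τ).injective hg
  exact Equiv.ext fun i => key _ i rfl

def fL {n : ℕ} (π : Equiv.Perm (Fin n)) : Prop :=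
  ∀ x, (x < π x ∧ π (π x) < π x) ∨ (π x < x ∧ π x < π (π x))

lemma fL_of_ud {m : ℕ} (σ : Equiv.Perm (Fin (2 * m))) (h : IsUpDownPerm σ) : fL (fF σ) := by
  have hev : ∀ i : Fin (2 * m), (i : ℕ) % 2 = 0 → ∃ h' : (i : ℕ) + 1 < 2 * m,
      fg σ i = σ ⟨i + 1, h'⟩ ∧ σ i < σ ⟨i + 1, h'⟩ := by
    intro i hi
    have h' : (i : ℕ) + 1 < 2 * m := by omega
    have h1 := (h i ⟨i + 1, h'⟩ rfl).1 hi
    refine ⟨h', ?_, h1⟩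
    rcases fg_cases σ i with ⟨_, _, h2⟩ | ⟨h2, _⟩
    · exact h2
    · exact absurd ((h2 h').trans_le (fM_le σ le_rfl)) (not_lt.2 h1.le)
  have hod : ∀ i : Fin (2 * m), (i : ℕ) % 2 = 1 → fg σ i < σ i ∧
      ∃ k : Fin (2 * m), (k : ℕ) % 2 = 0 ∧ fg σ i = σ k := by
    intro i hi
    rcases fg_cases σ i with ⟨h', _, h2⟩ | ⟨_, h2⟩
    · rw [h2]
      exact ⟨(h i ⟨i + 1, h'⟩ rfl).2 hi, _, show ((i : ℕ) + 1) % 2 = 0 by omega, rfl⟩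
    · rw [h2]
      have hpred : ∀ k : Fin (2 * m), k ≤ i → (k : ℕ) % 2 = 1 → fM σ i < σ k := by
        intro k hk hk1
        have hlt : (k : ℕ) - 1 < 2 * m := by omega
        have h1 := (h ⟨k - 1, hlt⟩ k (by simp; omega)).1 (by simp; omega)
        refine lt_of_le_of_lt (fM_le σ ?_) h1
        have : (k : ℕ) ≤ i := hk
        show (k : ℕ) - 1 ≤ i
        omega
      refine ⟨hpred i le_rfl hi, ?_⟩
      obtain ⟨k, hk, e⟩ := fM_mem σ i
      refine ⟨k, ?_, e⟩
      by_contra hk0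
      exact absurd e (hpred k hk (by omega)).ne
  intro x
  obtain ⟨i, rfl⟩ := σ.surjective x
  rw [fF_apply]
  rcases Nat.mod_two_eq_zero_or_one (i : ℕ) with hi | hi
  · left
    obtain ⟨h', h1, h2⟩ := hev i hi
    rw [h1, fF_apply]
    exact ⟨h2, (hod _ (show ((i : ℕ) + 1) % 2 = 1 by omega)).1⟩
  · right
    obtain ⟨h1, k, hk, e⟩ := hod i hi
    refine ⟨h1, ?_⟩
    rw [e, fF_apply]
    obtain ⟨h', h3, h4⟩ := hev k hk
    rw [h3]; exact h4

lemma ud_of_fL {n : ℕ} (σ : Equiv.Perm (Fin n)) (h : fL (fF σ)) : IsUpDownPerm σ := by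
  have hne : ∀ i, fg σ i ≠ σ i := by
    intro i
    have := h (σ i)
    rw [fF_apply] at this
    rcases this with h | h
    · exact h.1.ne'
    · exact h.1.ne
  have hmin : ∀ i, fM σ i = σ i → σ i < fg σ i := by
    intro i hi
    refine lt_of_le_of_ne ?_ (hne i).symm
    rcases fg_cases σ i with ⟨h', h1, h2⟩ | ⟨_, h2⟩
    · rw [h2, ← hi]; exact h1.le
    · rw [h2, hi]
  have hup : ∀ i, σ i < fg σ i → ∃ h' : (i : ℕ) + 1 < n, fg σ i = σ ⟨i + 1, h'⟩ := by
    intro i hi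
    rcases fg_cases σ i with ⟨h', h1, h2⟩ | ⟨_, h2⟩
    · exact ⟨h', h2⟩
    · rw [h2] at hi
      exact absurd hi (not_lt.2 (fM_le σ le_rfl))
  have P : ∀ k : ℕ, ∀ hk : k < n, (k % 2 = 0 → σ ⟨k, hk⟩ < fg σ ⟨k, hk⟩) ∧
      (k % 2 = 1 → fg σ ⟨k, hk⟩ < σ ⟨k, hk⟩) := by
    intro k
    induction k with
    | zero =>
      intro hk
      refine ⟨fun _ => hmin _ ?_, fun h => by simp at h⟩
      obtain ⟨k, hk', e⟩ := fM_mem σ ⟨0, hk⟩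
      rw [e]; congr 1
      exact Fin.ext (Nat.le_zero.1 hk')
    | succ k ih =>
      intro hk
      have hk' : k < n := by omega
      have ih := ih hk'
      have hL := h (σ ⟨k, hk'⟩)
      rw [fF_apply] at hL
      constructor
      · intro hp
        have h1 := ih.2 (by omega)
        rcases fg_cases σ ⟨k, hk'⟩ with ⟨h', _, h2⟩ | ⟨h2, _⟩
        · simp only at h2
          rw [h2, fF_apply] at hL
          rw [h2] at h1
          rcases hL with hL | hL
          · exact absurd hL.1 (not_lt.2 h1.le)
          · exact hL.2
        · apply hmin
          refine le_antisymm (fM_le σ le_rfl) ?_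
          obtain ⟨j, hj, e⟩ := fM_mem σ ⟨k + 1, hk⟩
          rw [e]
          have hj' : (j : ℕ) ≤ k + 1 := hj
          rcases Nat.lt_or_ge k j with hlt | hge
          · have : j = ⟨k + 1, hk⟩ := Fin.ext (by simp; omega)
            rw [this]
          · exact ((h2 hk).trans_le (fM_le σ (show (j : ℕ) ≤ k from hge))).le
      · intro hp
        have h1 := ih.1 (by omega)
        obtain ⟨h', h2⟩ := hup _ h1
        simp only at h2
        rw [h2, fF_apply] at hL
        rw [h2] at h1
        rcases hL with hL | hL
        · exact hL.2
        · exact absurd hL.1 (not_lt.2 h1.le)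
  intro i j hij
  have hi : (i : ℕ) + 1 < n := by omega
  have hj : j = ⟨i + 1, hi⟩ := Fin.ext hij
  subst hj
  have Pi := P i i.2
  constructor
  · intro h0
    obtain ⟨h', h2⟩ := hup i (Pi.1 h0)
    rw [← h2]; exact Pi.1 h0
  · intro h1
    rcases fg_cases σ i with ⟨h', _, h2⟩ | ⟨h2, _⟩
    · rw [← h2]; exact Pi.2 h1
    · exact (h2 hi).trans_le (fM_le σ le_rfl)

lemma pow_cyc {n : ℕ} (π : Equiv.Perm (Fin n)) (x : Fin n) : (π ^ cycLen π x) x = x := by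
  rw [Equiv.Perm.coe_pow]
  exact Function.iterate_minimalPeriod

lemma pow_mod_cyc {n : ℕ} (π : Equiv.Perm (Fin n)) (x : Fin n) (k : ℕ) :
    (π ^ (k % cycLen π x)) x = (π ^ k) x := by
  rw [Equiv.Perm.coe_pow, Equiv.Perm.coe_pow]
  exact Function.iterate_mod_minimalPeriod_eq

lemma cyc_of_fL {n : ℕ} (π : Equiv.Perm (Fin n)) (h : fL π) :
    IsCUD π ∧ ∀ x : Fin n, Even (cycLen π x) := by
  have step : ∀ y, (π y < π (π y) ↔ ¬ y < π y) := by
    intro y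
    rcases h y with h | h
    · simp [h.1, h.2.le]
    · simp [h.1.le, h.2]
  have it : ∀ x k, ((π ^ k) x < (π ^ (k + 1)) x ↔ (k % 2 = 0 ↔ x < π x)) := by
    intro x k
    induction k with
    | zero => simp
    | succ k ih =>
      have e1 : (π ^ (k + 1)) x = π ((π ^ k) x) := by rw [pow_succ']; rfl
      have e2 : (π ^ (k + 1 + 1)) x = π (π ((π ^ k) x)) := by rw [pow_succ', pow_succ']; rfl
      rw [e1] at ih
      rw [e1, e2, step, ih]
      have : (k + 1) % 2 = 0 ↔ ¬ k % 2 = 0 := by omega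
      rw [this]; tauto
  have ne : ∀ y, y ≠ π y := by
    intro y
    rcases h y with h | h
    · exact h.1.ne
    · exact h.1.ne'
  refine ⟨?_, ?_⟩
  · intro x hx i _
    have hx1 : x < π x := lt_of_le_of_ne (by simpa using hx 1) (ne x)
    have := it x i
    refine ⟨fun hi => this.2 (by simp [hi, hx1]), fun hi => ?_⟩
    have h1 : ¬ (π ^ i) x < (π ^ (i + 1)) x := by rw [this]; simp [hi, hx1]
    refine lt_of_le_of_ne (not_lt.1 h1) ?_
    rw [pow_succ']
    exact (ne _).symm
  · intro x
    have := it x (cycLen π x)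
    rw [pow_succ', Equiv.Perm.mul_apply, pow_cyc] at this
    rw [Nat.even_iff]
    tauto

lemma fL_of_cyc {n : ℕ} (π : Equiv.Perm (Fin n)) (h : IsCUD π)
    (hE : ∀ x : Fin n, Even (cycLen π x)) : fL π := by
  intro x
  -- orbit minimum
  obtain ⟨m, hm, hmin⟩ := Set.exists_min_image {y | ∃ k : ℕ, y = (π ^ k) x} id
    (Set.toFinite _) ⟨x, 0, by simp⟩
  obtain ⟨k, rfl⟩ := hm
  set m := (π ^ k) x with hmdef
  have hom : IsOrbitMin π m := by
    intro l
    refine hmin _ ⟨l + k, ?_⟩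
    rw [hmdef, pow_add]; rfl
  obtain ⟨j, hj⟩ : ∃ j : ℕ, x = (π ^ j) m := by
    have hs : π.SameCycle m x := by
      rw [hmdef]
      exact (Equiv.Perm.SameCycle.refl π x |>.symm).pow_left
    obtain ⟨j, _, e⟩ := hs.exists_pow_eq'
    exact ⟨j, e.symm⟩
  have hpos : 0 < cycLen π m := by
    unfold cycLen
    rw [Function.minimalPeriod_pos_iff_mem_periodicPts]
    exact π.injective.mem_periodicPts m
  have hev := hE m
  rw [Nat.even_iff] at hev
  have small : ∀ i, i < cycLen π m →
      ((i % 2 = 0 → (π ^ i) m < (π ^ (i + 1)) m) ∧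
     (i % 2 = 1 → (π ^ (i + 1)) m < (π ^ i) m)) := by
    intro i hi
    rcases Nat.lt_or_ge (i + 1) (cycLen π m) with h1 | h1
    · exact h m hom i h1
    · have e : i + 1 = cycLen π m := by omega
      refine ⟨fun h0 => by omega, fun _ => ?_⟩
      rw [e, pow_cyc]
      refine lt_of_le_of_ne (hom i) ?_
      intro he
      rw [Equiv.Perm.coe_pow] at he
      have : Function.IsPeriodicPt π i m := he.symm
      have := this.minimalPeriod_le (by omega)
      change cycLen π m ≤ i at this
      omega
  have all : ∀ i,
      ((i % 2 = 0 → (π ^ i) m < (π ^ (i + 1)) m) ∧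
     (i % 2 = 1 → (π ^ (i + 1)) m < (π ^ i) m)) := by
    intro i
    have hs := small (i % cycLen π m) (Nat.mod_lt _ hpos)
    have hp : i % cycLen π m % 2 = i % 2 := Nat.mod_mod_of_dvd _ (Nat.dvd_of_mod_eq_zero hev)
    rw [hp, pow_succ', Equiv.Perm.mul_apply, pow_mod_cyc] at hs
    rw [pow_succ', Equiv.Perm.mul_apply]
    exact hs
  have a1 := all j
  have a2 := all (j + 1)
  rw [pow_succ' π (j + 1), Equiv.Perm.mul_apply] at a2
  rw [pow_succ' π j, Equiv.Perm.mul_apply, ← hj] at a1 a2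
  rcases Nat.mod_two_eq_zero_or_one j with h0 | h0
  · exact Or.inl ⟨a1.1 h0, a2.2 (by omega)⟩
  · exact Or.inr ⟨a1.2 h0, a2.1 (by omega)⟩

/-- CUD permutations of `[2m]` with all cycles even are counted by `E (2m)`. -/
theorem stmt1 (m : ℕ) :
    Nat.card {π : Equiv.Perm (Fin (2 * m)) //
      IsCUD π ∧ ∀ x : Fin (2 * m), Even (cycLen π x)} = eulerE (2 * m) := by
  unfold eulerE
  symm
  refine Nat.card_congr (Equiv.subtypeEquiv
    (Equiv.ofBijective fF (Finite.injective_iff_bijective.1 fF_inj)) ?_)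
  intro σ
  constructor
  · intro h
    exact cyc_of_fL _ (fL_of_ud σ h)
  · intro h
    exact ud_of_fL σ (fL_of_cyc _ h.1 h.2)
end

section
/- For every m ≥ 0, the number of cycle-up-down permutations of [m] all of whose cycles have odd length equals E_m, the number of up-down permutations of [m]. -/
open Equiv Finset

/-- alternating lists with parity `p` -/
def UDL {m : ℕ} (p : ℕ) (l : List (Fin m)) : Prop :=
  ∀ (i : ℕ) (h : i + 1 < l.length),
    ((i + p) % 2 = 0 → l[i] < l[i+1]) ∧ ((i + p) % 2 = 1 → l[i+1] < l[i])

def ULS {m : ℕ} (p : ℕ) (S : Finset (Fin m)) : Type :=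
  {l : List (Fin m) // l.Nodup ∧ l.toFinset = S ∧ UDL p l}

def GoodAt {m : ℕ} (π : Equiv.Perm (Fin m)) (x : Fin m) : Prop :=
  Odd (cycLen π x) ∧ (IsOrbitMin π x → CycleUpDownAt π x)

def PS {m : ℕ} (S : Finset (Fin m)) : Type :=
  {π : Equiv.Perm (Fin m) // (∀ x, x ∉ S → π x = x) ∧ ∀ x, GoodAt π x}

def LS {m : ℕ} (a : Fin m) (S : Finset (Fin m)) : Type :=
  {l : List (Fin m) // l.Nodup ∧ l.toFinset ⊆ S.erase a ∧ UDL 1 l ∧ Even l.length}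

lemma udl_reverse {m : ℕ} (l : List (Fin m)) (h : Even l.length) (p q : ℕ) (hpq : (p + q) % 2 = 1)
    (hu : UDL p l) : UDL q l.reverse := by
  intro i hi
  simp only [List.length_reverse] at hi
  have := hu (l.length - 1 - (i+1)) (by omega)
  have e : l.length - 1 - (i+1) + 1 = l.length - 1 - i := by omega
  simp only [e] at this
  simp only [List.getElem_reverse]
  obtain ⟨k, hk⟩ := h
  constructor
  · intro h1
    exact this.2 (by omega)
  · intro h1
    exact this.1 (by omega)

lemma udl_append {m : ℕ} (a : Fin m) (L R : List (Fin m)) (hL : ∀ x ∈ L, a < x)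
    (hR : ∀ x ∈ R, a < x) :
    UDL 0 (L ++ a :: R) ↔ (UDL 0 L ∧ Even L.length ∧ UDL 1 R) := by
  constructor
  · intro h
    have hev : Even L.length := by
      by_contra hne
      rw [Nat.not_even_iff] at hne
      have := (h (L.length - 1) (by simp; omega)).1 (by omega)
      have e : L.length - 1 + 1 = L.length := by omega
      simp only [e] at this
      rw [List.getElem_append_left (by omega)] at this
      simp at this
      exact absurd (hL _ (List.getElem_mem _)) (not_lt.2 this.le)
    refine ⟨?_, hev, ?_⟩
    · intro i hi
      have := h i (by simp; omega)
      rwa [List.getElem_append_left (by omega), List.getElem_append_left (by omega)] at this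
    · intro i hi
      have := h (L.length + 1 + i) (by simp; omega)
      rw [List.getElem_append_right (by omega), List.getElem_append_right (by omega)] at this
      have e1 : L.length + 1 + i - L.length = i + 1 := by omega
      have e2 : L.length + 1 + i + 1 - L.length = i + 1 + 1 := by omega
      simp only [e1, e2, List.getElem_cons_succ] at this
      obtain ⟨k, hk⟩ := hev
      exact ⟨fun h1 => this.1 (by omega), fun h1 => this.2 (by omega)⟩
  · rintro ⟨h1, hev, h2⟩ i hi
    obtain ⟨k, hk⟩ := hev
    simp at hi
    rcases lt_trichotomy (i+1) L.length with hlt | heq | hgt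
    · have := h1 i hlt
      rwa [List.getElem_append_left (by omega), List.getElem_append_left (by omega)]
    · rw [List.getElem_append_left (by omega), List.getElem_append_right (by omega)]
      simp only [heq, Nat.sub_self, List.getElem_cons_zero]
      exact ⟨fun h => by omega, fun _ => hL _ (List.getElem_mem _)⟩
    · rw [List.getElem_append_right (by omega), List.getElem_append_right (by omega)]
      have e2 : i + 1 - L.length = i - L.length + 1 := by omega
      simp only [e2, List.getElem_cons_succ]
      rcases Nat.eq_or_lt_of_le (Nat.le_of_lt_succ hgt) with h | h
      · have e1 : i - L.length = 0 := by omega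
        simp only [e1, List.getElem_cons_zero]
        exact ⟨fun _ => hR _ (List.getElem_mem _), fun h => by omega⟩
      · obtain ⟨j, hj⟩ : ∃ j, i - L.length = j + 1 := ⟨i - L.length - 1, by omega⟩
        simp only [hj, List.getElem_cons_succ]
        have := h2 j (by omega)
        exact ⟨fun h => this.1 (by omega), fun h => this.2 (by omega)⟩

lemma exists_rev {m : ℕ} (T : Finset (Fin m)) : ∃ f : Fin m → Fin m,
    (∀ x ∈ T, f x ∈ T) ∧ (∀ x ∈ T, f (f x) = x) ∧ (∀ x ∈ T, ∀ y ∈ T, x < y → f y < f x) := by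
  classical
  let e := T.orderIsoOfFin rfl
  refine ⟨fun x => if h : x ∈ T then (e (Fin.rev (e.symm ⟨x, h⟩)) : Fin m) else x, ?_, ?_, ?_⟩
  · intro x hx
    simp [hx]
  · intro x hx
    simp [hx]
  · intro x hx y hy hxy
    simp only [hx, hy, dif_pos]
    have : e.symm ⟨x, hx⟩ < e.symm ⟨y, hy⟩ := e.symm.strictMono hxy
    have h2 : Fin.rev (e.symm ⟨y, hy⟩) < Fin.rev (e.symm ⟨x, hx⟩) := Fin.rev_lt_rev.2 this
    exact e.strictMono h2

lemma map_props {m : ℕ} (T : Finset (Fin m)) (f : Fin m → Fin m)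
    (h1 : ∀ x ∈ T, f x ∈ T) (h2 : ∀ x ∈ T, f (f x) = x)
    (h3 : ∀ x ∈ T, ∀ y ∈ T, x < y → f y < f x) (p q : ℕ) (hpq : (p + q) % 2 = 1)
    (l : List (Fin m)) (hl : l.Nodup ∧ l.toFinset = T ∧ UDL p l) :
    (l.map f).Nodup ∧ (l.map f).toFinset = T ∧ UDL q (l.map f) := by
  obtain ⟨a, b, c⟩ := hl
  have hm : ∀ x, x ∈ l ↔ x ∈ T := by intro x; rw [← b]; simp
  refine ⟨?_, ?_, ?_⟩
  · refine List.Nodup.map_on ?_ a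
    intro x hx y hy hxy
    rw [← h2 x ((hm x).1 hx), hxy, h2 y ((hm y).1 hy)]
  · ext x
    simp only [List.mem_toFinset, List.mem_map, hm]
    constructor
    · rintro ⟨y, hy, rfl⟩
      exact h1 y hy
    · intro hx
      exact ⟨f x, h1 x hx, h2 x hx⟩
  · intro i hi
    simp only [List.length_map] at hi
    have := c i hi
    simp only [List.getElem_map]
    have ha := (hm _).1 (List.getElem_mem (show i < l.length by omega))
    have hb := (hm _).1 (List.getElem_mem hi)
    exact ⟨fun h => h3 _ hb _ ha (this.2 (by omega)), fun h => h3 _ ha _ hb (this.1 (by omega))⟩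

lemma u_equiv_d {m : ℕ} (T : Finset (Fin m)) : Nonempty (ULS 0 T ≃ ULS 1 T) := by
  obtain ⟨f, h1, h2, h3⟩ := exists_rev T
  have key : ∀ l : List (Fin m), l.toFinset = T → (l.map f).map f = l := by
    intro l hl
    rw [List.map_map]
    conv_rhs => rw [← List.map_id l]
    apply List.map_congr_left
    intro x hx
    exact h2 x (by rw [← hl]; simpa using hx)
  exact ⟨{ toFun := fun l => ⟨l.1.map f, map_props T f h1 h2 h3 0 1 rfl l.1 l.2⟩
           invFun := fun l => ⟨l.1.map f, map_props T f h1 h2 h3 1 0 rfl l.1 l.2⟩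
           left_inv := fun l => Subtype.ext (key l.1 l.2.2.1)
           right_inv := fun l => Subtype.ext (key l.1 l.2.2.1) }⟩

lemma u_decomp {m : ℕ} (S : Finset (Fin m)) (a : Fin m) (ha : a ∈ S) (hmin : ∀ x ∈ S, a ≤ x) :
    Nonempty ((Σ L : LS a S, ULS 1 (S.erase a \ L.1.toFinset)) ≃ ULS 0 S) := by
  have hlt : ∀ x ∈ S.erase a, a < x := fun x hx =>
    lt_of_le_of_ne (hmin x (Finset.mem_of_mem_erase hx)) (Finset.ne_of_mem_erase hx).symm
  refine ⟨Equiv.ofBijective (fun X => ⟨X.1.1.reverse ++ a :: X.2.1, ?_⟩) ⟨?_, ?_⟩⟩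
  · obtain ⟨⟨L, l1, l2, l3, l4⟩, ⟨R, r1, r2, r3⟩⟩ := X
    have hmL : ∀ x ∈ L, x ∈ S.erase a := fun x hx => l2 (by simpa using hx)
    have hmR : ∀ x, x ∈ R ↔ x ∈ S.erase a ∧ x ∉ L := fun x => by
      have := Finset.ext_iff.1 r2 x
      simpa using this
    refine ⟨?_, ?_, ?_⟩
    · simp only [List.nodup_append, List.nodup_reverse, List.nodup_cons, List.mem_reverse,
        List.mem_cons]
      refine ⟨l1, ⟨?_, r1⟩, ?_⟩
      · intro h
        exact absurd (hlt a ((hmR a).1 h).1) (lt_irrefl a)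
      · rintro x hx y (rfl | hy) rfl
        · exact absurd (hlt _ (hmL _ hx)) (lt_irrefl _)
        · exact ((hmR _).1 hy).2 hx
    · ext x
      simp only [List.mem_toFinset, List.mem_append, List.mem_reverse, List.mem_cons, hmR]
      by_cases hxa : x = a
      · subst hxa; simp [ha]
      · have := hmL x
        simp only [Finset.mem_erase] at this ⊢
        tauto
    · rw [udl_append a]
      · exact ⟨udl_reverse _ l4 1 0 rfl l3, by simpa using l4, r3⟩
      · intro x hx
        exact hlt x (hmL x (by simpa using hx))
      · intro x hx
        exact hlt x ((hmR x).1 hx).1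
  · rintro ⟨⟨L, l1, l2, l3, l4⟩, ⟨R, r1, r2, r3⟩⟩ ⟨⟨L', l1', l2', l3', l4'⟩, ⟨R', r1', r2', r3'⟩⟩ h
    have h' : L.reverse ++ a :: R = L'.reverse ++ a :: R' := congrArg Subtype.val h
    have n1 : a ∉ L.reverse := fun hx => absurd (hlt _ (l2 (by simpa using hx))) (lt_irrefl a)
    have n2 : a ∉ L'.reverse := fun hx => absurd (hlt _ (l2' (by simpa using hx))) (lt_irrefl a)
    have hh : L.reverse = L'.reverse ∧ R = R' := by
      have e1 : List.idxOf a (L.reverse ++ a :: R) = L.reverse.length := by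
        rw [List.idxOf_append_of_notMem n1]; simp
      have e2 : List.idxOf a (L'.reverse ++ a :: R') = L'.reverse.length := by
        rw [List.idxOf_append_of_notMem n2]; simp
      have := List.append_inj h' (by rw [← e1, ← e2, h'])
      exact ⟨this.1, by simpa using this.2⟩
    obtain ⟨hh1, rfl⟩ := hh
    obtain rfl := List.reverse_injective hh1
    rfl
  · rintro ⟨l, n, t, u⟩
    have hml : ∀ x, x ∈ l ↔ x ∈ S := fun x => by rw [← t]; simp
    obtain ⟨L, R, rfl⟩ := List.append_of_mem ((hml a).2 ha)
    have n' := n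
    simp only [List.nodup_append, List.nodup_cons, List.mem_cons] at n'
    obtain ⟨n1, ⟨n2, n3⟩, n4⟩ := n'
    have hL : ∀ x ∈ L, x ∈ S.erase a := fun x hx =>
      Finset.mem_erase.2 ⟨n4 x hx a (Or.inl rfl), (hml x).1 (by simp [hx])⟩
    have hR : ∀ x ∈ R, x ∈ S.erase a := fun x hx =>
      Finset.mem_erase.2 ⟨fun h => n2 (h ▸ hx), (hml x).1 (by simp [hx])⟩
    obtain ⟨u1, u2, u3⟩ := (udl_append a L R (fun x hx => hlt x (hL x hx))
      (fun x hx => hlt x (hR x hx))).1 u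
    refine ⟨⟨⟨L.reverse, by simpa using n1, fun x hx => hL x (by simpa using hx),
      udl_reverse _ u2 0 1 rfl u1, by simpa using u2⟩, ⟨R, n3, ?_, u3⟩⟩, ?_⟩
    · ext x
      have h1 := hR x
      have h2 := hml x
      have h3 : x ∈ L → x ∉ R := fun hx hx' => n4 x hx x (Or.inr hx') rfl
      simp only [List.mem_append, List.mem_cons] at h2
      simp only [Finset.mem_erase] at h1
      simp only [List.mem_toFinset, Finset.mem_sdiff, Finset.mem_erase, List.mem_reverse]
      tauto
    · apply Subtype.ext
      simp

lemma cycLen_congr {m : ℕ} {π ρ : Equiv.Perm (Fin m)} {x : Fin m}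
    (h : ∀ k : ℕ, (π ^ k) x = (ρ ^ k) x) : cycLen π x = cycLen ρ x := by
  unfold cycLen
  apply Nat.dvd_antisymm
  · rw [← Function.isPeriodicPt_iff_minimalPeriod_dvd]
    have := Function.isPeriodicPt_minimalPeriod ρ x
    unfold Function.IsPeriodicPt Function.IsFixedPt at *
    rw [Equiv.Perm.iterate_eq_pow] at *
    rw [h]; exact this
  · rw [← Function.isPeriodicPt_iff_minimalPeriod_dvd]
    have := Function.isPeriodicPt_minimalPeriod π x
    unfold Function.IsPeriodicPt Function.IsFixedPt at *
    rw [Equiv.Perm.iterate_eq_pow] at *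
    rw [← h]; exact this

lemma goodAt_congr {m : ℕ} {π ρ : Equiv.Perm (Fin m)} {x : Fin m}
    (h : ∀ k : ℕ, (π ^ k) x = (ρ ^ k) x) : GoodAt π x ↔ GoodAt ρ x := by
  unfold GoodAt IsOrbitMin CycleUpDownAt
  rw [cycLen_congr h]
  simp only [h]

lemma goodAt_fixed {m : ℕ} {π : Equiv.Perm (Fin m)} {x : Fin m} (h : π x = x) : GoodAt π x := by
  have : cycLen π x = 1 := Function.minimalPeriod_eq_one_iff_isFixedPt.2 h
  refine ⟨by rw [this]; exact odd_one, fun _ i hi => ?_⟩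
  omega

lemma pow_eq_iff_dvd {m : ℕ} (π : Equiv.Perm (Fin m)) (x : Fin m) (k : ℕ) :
    (π ^ k) x = x ↔ cycLen π x ∣ k := by
  unfold cycLen
  rw [← Function.isPeriodicPt_iff_minimalPeriod_dvd]
  unfold Function.IsPeriodicPt Function.IsFixedPt
  rw [Equiv.Perm.iterate_eq_pow]

lemma cycLen_formPerm {m : ℕ} (l : List (Fin m)) (hl : l.Nodup) (x : Fin m) (hx : x ∈ l) :
    cycLen l.formPerm x = l.length := by
  obtain ⟨i, hi, rfl⟩ := List.getElem_of_mem hx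
  have key : ∀ k, cycLen l.formPerm l[i] ∣ k ↔ l.length ∣ k := by
    intro k
    rw [← pow_eq_iff_dvd, List.formPerm_pow_apply_getElem _ hl, hl.getElem_inj_iff]
    constructor
    · intro h
      have h2 : (i + k) ≡ i + 0 [MOD l.length] := by
        show (i + k) % _ = (i + 0) % _
        rw [h, Nat.add_zero, Nat.mod_eq_of_lt hi]
      exact (Nat.modEq_zero_iff_dvd).1 (Nat.ModEq.add_left_cancel' i h2)
    · rintro ⟨q, rfl⟩
      rw [Nat.add_mul_mod_self_left, Nat.mod_eq_of_lt hi]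
  exact Nat.dvd_antisymm ((key _).2 dvd_rfl) ((key _).1 dvd_rfl)

lemma formPerm_pow_head {m : ℕ} (a : Fin m) (L : List (Fin m)) (hl : (a :: L).Nodup) (k : ℕ)
    (hk : k < (a :: L).length) : ((a :: L).formPerm ^ k) a = (a :: L)[k] := by
  have := List.formPerm_pow_apply_getElem (a :: L) hl k 0 (by simp)
  simp only [Nat.zero_add, Nat.mod_eq_of_lt hk] at this
  exact this

lemma goodAt_formPerm {m : ℕ} (a : Fin m) (L : List (Fin m)) (hl : (a :: L).Nodup)
    (hL : ∀ x ∈ L, a < x) :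
    (∀ x ∈ a :: L, GoodAt (a :: L).formPerm x) ↔ (UDL 1 L ∧ Even L.length) := by
  have hmin : IsOrbitMin (a :: L).formPerm a := by
    intro k
    have := List.formPerm_pow_apply_getElem (a :: L) hl k 0 (by simp)
    simp only [List.getElem_cons_zero] at this
    rw [this]
    rcases List.mem_cons.1 (List.getElem_mem (l := a :: L)
      (Nat.mod_lt (0 + k) (by simp : 0 < (a :: L).length))) with h | h
    · exact h.ge
    · exact (hL _ h).le
  have hud : CycleUpDownAt (a :: L).formPerm a ↔ UDL 1 L := by
    unfold CycleUpDownAt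
    rw [cycLen_formPerm _ hl a (by simp)]
    constructor
    · intro h i hi
      have := h (i+1) (by simp; omega)
      rw [formPerm_pow_head a L hl _ (by simp; omega),
        formPerm_pow_head a L hl _ (by simp; omega)] at this
      exact this
    · intro h i hi
      rw [formPerm_pow_head a L hl _ (by omega), formPerm_pow_head a L hl _ hi]
      cases i with
      | zero =>
        exact ⟨fun _ => hL _ (List.getElem_mem _), fun h => by omega⟩
      | succ i =>
        exact h i (by simp at hi; omega)
  constructor
  · intro h
    obtain ⟨h1, h2⟩ := h a (by simp)
    rw [cycLen_formPerm _ hl a (by simp), List.length_cons] at h1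
    exact ⟨hud.1 (h2 hmin), by rcases h1 with ⟨k, hk⟩; exact ⟨k, by omega⟩⟩
  · rintro ⟨h1, h2⟩ x hx
    refine ⟨?_, ?_⟩
    · rw [cycLen_formPerm _ hl x hx, List.length_cons]
      exact h2.add_one
    · intro hx2
      have : x = a := by
        by_contra hne
        have hxL : x ∈ L := (List.mem_cons.1 hx).resolve_left hne
        obtain ⟨i, hi, rfl⟩ := List.getElem_of_mem hx
        have h3 := hx2 ((a :: L).length - i)
        rw [List.formPerm_pow_apply_getElem _ hl] at h3
        have e : i + ((a :: L).length - i) = (a :: L).length := by omega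
        simp only [e, Nat.mod_self, List.getElem_cons_zero] at h3
        exact absurd (hL _ hxL) (not_lt.2 h3)
      subst this
      exact hud.2 h1

lemma mul_pow_apply {m : ℕ} (l : List (Fin m)) (σ : Equiv.Perm (Fin m))
    (hσ : ∀ x ∈ l, σ x = x) (x : Fin m) (k : ℕ) :
    ((l.formPerm * σ) ^ k) x = if x ∈ l then (l.formPerm ^ k) x else (σ ^ k) x := by
  have hd : Equiv.Perm.Disjoint l.formPerm σ := by
    intro y
    by_cases hy : y ∈ l
    · exact Or.inr (hσ y hy)
    · exact Or.inl (List.formPerm_apply_of_notMem hy)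
  rw [hd.commute.mul_pow]
  split_ifs with hx
  · rw [Equiv.Perm.mul_apply, Equiv.Perm.pow_apply_eq_self_of_apply_eq_self (hσ x hx)]
  · rw [(hd.commute.pow_pow k k).eq, Equiv.Perm.mul_apply,
      Equiv.Perm.pow_apply_eq_self_of_apply_eq_self (List.formPerm_apply_of_notMem hx)]

lemma goodAt_mul {m : ℕ} (l : List (Fin m)) (σ : Equiv.Perm (Fin m))
    (hσ : ∀ x ∈ l, σ x = x) :
    (∀ x, GoodAt (l.formPerm * σ) x) ↔ ((∀ x ∈ l, GoodAt l.formPerm x) ∧ ∀ x, GoodAt σ x) := by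
  have h1 : ∀ x ∈ l, (GoodAt (l.formPerm * σ) x ↔ GoodAt l.formPerm x) := fun x hx =>
    goodAt_congr fun k => by rw [mul_pow_apply l σ hσ, if_pos hx]
  have h2 : ∀ x, x ∉ l → (GoodAt (l.formPerm * σ) x ↔ GoodAt σ x) := fun x hx =>
    goodAt_congr fun k => by rw [mul_pow_apply l σ hσ, if_neg hx]
  constructor
  · intro h
    refine ⟨fun x hx => (h1 x hx).1 (h x), fun x => ?_⟩
    by_cases hx : x ∈ l
    · exact goodAt_fixed (hσ x hx)
    · exact (h2 x hx).1 (h x)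
  · rintro ⟨ha, hb⟩ x
    by_cases hx : x ∈ l
    · exact (h1 x hx).2 (ha x hx)
    · exact (h2 x hx).2 (hb x)

lemma p_decomp {m : ℕ} (S : Finset (Fin m)) (a : Fin m) (ha : a ∈ S) (hmin : ∀ x ∈ S, a ≤ x) :
    Nonempty ((Σ L : LS a S, PS (S.erase a \ L.1.toFinset)) ≃ PS S) := by
  have hlt : ∀ x ∈ S.erase a, a < x := fun x hx =>
    lt_of_le_of_ne (hmin x (Finset.mem_of_mem_erase hx)) (Finset.ne_of_mem_erase hx).symm
  have fixσ : ∀ (L : List (Fin m)) (σ : Equiv.Perm (Fin m)),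
      (∀ x, x ∉ S.erase a \ L.toFinset → σ x = x) → ∀ x ∈ a :: L, σ x = x := by
    intro L σ h x hx
    apply h
    simp only [Finset.mem_sdiff, Finset.mem_erase, List.mem_toFinset]
    rcases List.mem_cons.1 hx with h | h <;> tauto
  have nd : ∀ L : LS a S, (a :: L.1).Nodup := fun L => List.nodup_cons.2
    ⟨fun h => absurd (hlt a (L.2.2.1 (by simpa using h))) (lt_irrefl a), L.2.1⟩
  refine ⟨Equiv.ofBijective (fun X => ⟨(a :: X.1.1).formPerm * X.2.1, ?_⟩) ⟨?_, ?_⟩⟩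
  · obtain ⟨L, ⟨σ, s1, s2⟩⟩ := X
    have hn := nd L
    obtain ⟨L, l1, l2, l3, l4⟩ := L
    have hf := fixσ L σ s1
    refine ⟨?_, ?_⟩
    · intro x hx
      have hxl : x ∉ a :: L := by
        intro h
        rcases List.mem_cons.1 h with rfl | h
        · exact hx ha
        · exact hx (Finset.mem_of_mem_erase (l2 (by simpa using h)))
      have hs : σ x = x := s1 x (by simp [hx])
      show (a :: L).formPerm (σ x) = x
      rw [hs, List.formPerm_apply_of_notMem hxl]
    · exact (goodAt_mul _ σ hf).2 ⟨(goodAt_formPerm a L hn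
        (fun x hx => hlt x (l2 (by simpa using hx)))).2 ⟨l3, l4⟩, s2⟩
  · rintro ⟨L, ⟨σ, s1, s2⟩⟩ ⟨L', ⟨σ', s1', s2'⟩⟩ h
    have h' : (a :: L.1).formPerm * σ = (a :: L'.1).formPerm * σ' := congrArg Subtype.val h
    have hp : ∀ k, ((a :: L.1).formPerm ^ k) a = ((a :: L'.1).formPerm ^ k) a := by
      intro k
      have e1 := mul_pow_apply _ σ (fixσ _ σ s1) a k
      have e2 := mul_pow_apply _ σ' (fixσ _ σ' s1') a k
      rw [if_pos (by simp)] at e1 e2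
      rw [← e1, ← e2, h']
    have hlen := cycLen_congr hp
    rw [cycLen_formPerm _ (nd L) a (by simp), cycLen_formPerm _ (nd L') a (by simp)] at hlen
    have hLL : a :: L.1 = a :: L'.1 := by
      apply List.ext_getElem hlen
      intro k hk hk'
      rw [← formPerm_pow_head a _ (nd L) k hk, ← formPerm_pow_head a _ (nd L') k hk', hp]
    have hL : L = L' := Subtype.ext (List.cons.inj hLL).2
    subst hL
    obtain rfl := mul_left_cancel h'
    rfl
  · rintro ⟨π, p1, p2⟩
    obtain ⟨N, hN⟩ : ∃ N, cycLen π a = N + 1 := by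
      obtain ⟨k, hk⟩ := (p2 a).1
      exact ⟨_, hk⟩
    let L : List (Fin m) := (List.range N).map (fun i => (π ^ (i+1)) a)
    have hget : ∀ i (hi : i < (a :: L).length), (a :: L)[i] = (π ^ i) a := by
      intro i hi
      cases i with
      | zero => simp
      | succ i => simp [L]
    have hlen : (a :: L).length = cycLen π a := by simp [L, hN]
    have hmem : ∀ k, (π ^ k) a ∈ a :: L := by
      intro k
      have h1 : (π ^ k) a = (π ^ (k % cycLen π a)) a := by
        conv_lhs => rw [← Nat.mod_add_div k (cycLen π a), pow_add, Equiv.Perm.mul_apply]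
        rw [(pow_eq_iff_dvd π a _).2 (dvd_mul_right _ _)]
      have h2 : k % cycLen π a < (a :: L).length := by
        rw [hlen]; exact Nat.mod_lt _ (by omega)
      rw [h1, ← hget _ h2]
      exact List.getElem_mem _
    have hmem' : ∀ x ∈ a :: L, ∃ k, x = (π ^ k) a := by
      intro x hx
      obtain ⟨i, hi, rfl⟩ := List.getElem_of_mem hx
      exact ⟨i, hget i hi⟩
    have hn : (a :: L).Nodup := by
      rw [List.nodup_iff_injective_get]
      have aux : ∀ i j : ℕ, i < j → j < (a :: L).length → (π ^ i) a ≠ (π ^ j) a := by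
        intro i j hij hj h
        obtain ⟨d, rfl⟩ := Nat.exists_eq_add_of_lt hij
        rw [add_assoc, pow_add, Equiv.Perm.mul_apply] at h
        have := (pow_eq_iff_dvd π a _).1 ((π ^ i).injective h).symm
        have := Nat.le_of_dvd (by omega) this
        omega
      intro i j hij
      simp only [List.get_eq_getElem, hget] at hij
      apply Fin.ext
      rcases lt_trichotomy i.1 j.1 with h | h | h
      · exact absurd hij (aux _ _ h j.2)
      · exact h
      · exact absurd hij.symm (aux _ _ h i.2)
    have hS : ∀ x ∈ a :: L, x ∈ S := by
      intro x hx
      obtain ⟨k, rfl⟩ := hmem' x hx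
      by_contra hc
      have h1 := p1 _ hc
      rw [← Equiv.Perm.mul_apply, ← pow_succ', pow_succ, Equiv.Perm.mul_apply] at h1
      have h2 := (π ^ k).injective h1
      rw [Equiv.Perm.pow_apply_eq_self_of_apply_eq_self h2] at hc
      exact hc ha
    have hLS : ∀ x ∈ L, x ∈ S.erase a := fun x hx => Finset.mem_erase.2
      ⟨fun h => (List.nodup_cons.1 hn).1 (h ▸ hx), hS x (by simp [hx])⟩
    have hc : ∀ x ∈ a :: L, (a :: L).formPerm x = π x := by
      intro x hx
      obtain ⟨i, hi, rfl⟩ := List.getElem_of_mem hx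
      rw [List.formPerm_apply_getElem _ hn, hget, hget, ← Equiv.Perm.mul_apply, ← pow_succ']
      conv_rhs => rw [← Nat.mod_add_div (i+1) (cycLen π a), pow_add, Equiv.Perm.mul_apply]
      rw [(pow_eq_iff_dvd π a _).2 (dvd_mul_right _ _), hlen]
    let σ : Equiv.Perm (Fin m) := (a :: L).formPerm⁻¹ * π
    have hσ : (a :: L).formPerm * σ = π := by simp [σ]
    have hf : ∀ x ∈ a :: L, σ x = x := by
      intro x hx
      show (a :: L).formPerm⁻¹ (π x) = x
      rw [← hc x hx]; simp
    have hg := (goodAt_mul (a :: L) σ hf).1 (by rw [hσ]; exact p2)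
    have hu := (goodAt_formPerm a L hn (fun x hx => hlt x (hLS x hx))).1 hg.1
    refine ⟨⟨⟨L, (List.nodup_cons.1 hn).2, fun x hx => hLS x (by simpa using hx), hu.1, hu.2⟩,
      ⟨σ, ?_, hg.2⟩⟩, Subtype.ext hσ⟩
    intro x hx
    by_cases hxl : x ∈ a :: L
    · exact hf x hxl
    · have hxS : x ∉ S := by
        intro h
        apply hx
        simp only [List.mem_cons, not_or] at hxl
        simp [h, hxl.1, hxl.2]
      show (a :: L).formPerm⁻¹ (π x) = x
      rw [p1 x hxS, Equiv.Perm.inv_eq_iff_eq, List.formPerm_apply_of_notMem hxl]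

lemma main_equiv {m : ℕ} (S : Finset (Fin m)) : Nonempty (PS S ≃ ULS 0 S) := by
  induction S using Finset.strongInduction with
  | H S ih =>
    rcases S.eq_empty_or_nonempty with rfl | hne
    · refine ⟨{ toFun := fun _ => ⟨[], by simp, by simp, fun i h => by simp at h⟩
                invFun := fun _ => ⟨1, fun _ _ => rfl, fun x => goodAt_fixed rfl⟩
                left_inv := ?_
                right_inv := ?_ }⟩
      · rintro ⟨π, h, _⟩
        apply Subtype.ext
        ext x
        simp [h x]
      · rintro ⟨l, _, h, _⟩
        apply Subtype.ext
        simpa using (List.toFinset_eq_empty_iff l).1 h |>.symm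
    · have ha := S.min'_mem hne
      have hmin : ∀ x ∈ S, S.min' hne ≤ x := fun x hx => S.min'_le x hx
      generalize S.min' hne = a at ha hmin
      obtain ⟨e1⟩ := u_decomp S a ha hmin
      obtain ⟨e2⟩ := p_decomp S a ha hmin
      have h : ∀ L : LS a S, Nonempty (PS (S.erase a \ L.1.toFinset) ≃
          ULS 1 (S.erase a \ L.1.toFinset)) := by
        intro L
        obtain ⟨e⟩ := ih (S.erase a \ L.1.toFinset)
          (lt_of_le_of_lt Finset.sdiff_subset (Finset.erase_ssubset ha))
        obtain ⟨f⟩ := u_equiv_d (S.erase a \ L.1.toFinset)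
        exact ⟨e.trans f⟩
      exact ⟨e2.symm.trans ((Equiv.sigmaCongrRight fun L => (h L).some).trans e1)⟩

lemma euler_equiv (m : ℕ) :
    Nonempty ({π : Equiv.Perm (Fin m) // IsUpDownPerm π} ≃ ULS 0 (Finset.univ : Finset (Fin m))) := by
  refine ⟨Equiv.ofBijective (fun π => ⟨List.ofFn π.1, ?_, ?_, ?_⟩) ⟨?_, ?_⟩⟩
  · exact List.nodup_ofFn.2 π.1.injective
  · ext x
    simpa [List.mem_ofFn] using π.1.surjective x
  · intro i hi
    have hi' : i + 1 < m := by simpa using hi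
    simpa using π.2 ⟨i, by omega⟩ ⟨i+1, hi'⟩ rfl
  · rintro ⟨π, _⟩ ⟨ρ, _⟩ h
    apply Subtype.ext
    have h' : List.ofFn π = List.ofFn ρ := congrArg Subtype.val h
    exact Equiv.coe_fn_injective (List.ofFn_injective h')
  · rintro ⟨l, n, t, u⟩
    have hlen : l.length = m := by
      have := List.toFinset_card_of_nodup n
      rw [t] at this
      simpa using this.symm
    let g : Fin m → Fin m := fun i => l[i.1]'(by omega)
    have hg : Function.Injective g := by
      intro i j hij
      exact Fin.ext ((n.getElem_inj_iff).1 hij)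
    refine ⟨⟨Equiv.ofBijective g (Finite.injective_iff_bijective.1 hg), ?_⟩, ?_⟩
    · intro i j hij
      have := u i.1 (by omega)
      simp only [Equiv.ofBijective_apply, g, hij]
      simpa using this
    · apply Subtype.ext
      apply List.ext_getElem
      · simp [hlen]
      · intro i h1 h2
        simp [g]

theorem stmt2 (m : ℕ) :
    Nat.card {π : Equiv.Perm (Fin m) //
      IsCUD π ∧ ∀ x : Fin m, Odd (cycLen π x)} = eulerE m := by
  obtain ⟨e⟩ := main_equiv (Finset.univ : Finset (Fin m))
  obtain ⟨f⟩ := euler_equiv m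
  unfold eulerE
  refine Nat.card_congr (Equiv.trans (Equiv.subtypeEquivRight ?_) (e.trans f.symm))
  intro π
  simp only [Finset.mem_univ, not_true_eq_false, false_imp_iff, implies_true, true_and]
  exact ⟨fun h x => ⟨h.2 x, h.1 x⟩, fun h => ⟨fun x => (h x).2, fun x => (h x).1⟩⟩
end

section
/- For every n ≥ 1, the number of cyclic permutations of [n] (permutations consisting of a single cycle of length n) whose unique cycle is up-down equals E_{n-1}, the number of up-down permutations of [n-1]. -/
open Equiv Finset

theorem aux_cyc {m : ℕ} (π w : Equiv.Perm (Fin (m+1))) 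
    (h : ∀ k : Fin (m+1), (π ^ (k:ℕ)) 0 = w k) : cycLen π 0 = m + 1 := by
  have hper : 0 ∈ Function.periodicPts (⇑π) := by
    rw [Function.mem_periodicPts]
    exact ⟨orderOf π, orderOf_pos π, by
      rw [Function.IsPeriodicPt, Function.IsFixedPt, ← Equiv.Perm.coe_pow, pow_orderOf_eq_one]; rfl⟩
  have hpos := Function.minimalPeriod_pos_of_mem_periodicPts hper
  have hle : Function.minimalPeriod (⇑π) 0 ≤ m + 1 := by
    simpa using Function.minimalPeriod_le_card (f := ⇑π) (x := (0 : Fin (m+1)))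
  unfold cycLen
  by_contra hne
  have hlt : Function.minimalPeriod (⇑π) 0 < m + 1 := by omega
  have h1 := h ⟨_, hlt⟩
  have h0 := h 0
  have h2 := Function.iterate_minimalPeriod (f := ⇑π) (x := (0 : Fin (m+1)))
  rw [← Equiv.Perm.coe_pow] at h2
  simp only [Fin.val_zero, pow_zero, Equiv.Perm.coe_one, id] at h0 h1
  rw [h2] at h1
  have h3 := w.injective (h0.symm.trans h1)
  have h4 := congrArg Fin.val h3
  simp at h4
  omega

theorem aux_iff {m : ℕ} (π w : Equiv.Perm (Fin (m+1))) (σ : Equiv.Perm (Fin m))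
    (h : ∀ k : Fin (m+1), (π ^ (k:ℕ)) 0 = w k)
    (hw : ∀ i : Fin m, w i.succ = (Fin.rev (σ i)).succ) :
    IsCyclicPerm π ∧ (IsCUD π ↔ IsUpDownPerm σ) := by
  have hc := aux_cyc π w h
  have h0 : w 0 = 0 := by simpa using (h 0).symm
  have hs : ∀ y, ∃ k : ℕ, (π ^ k) 0 = y := fun y => ⟨_, by
    have := h (w.symm y); simpa using this⟩
  refine ⟨?_, ?_⟩
  · have : ∀ y, π.SameCycle 0 y := fun y => by
      obtain ⟨k, hk⟩ := hs y
      exact ⟨k, by simpa using hk⟩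
    exact fun x y => (this x).symm.trans (this y)
  constructor
  · intro hcud i j hij
    have := hcud 0 (fun k => Fin.zero_le _) (i+1) (by rw [hc]; omega)
    have e1 := h i.succ
    have e2 := h j.succ
    rw [hw] at e1 e2
    simp only [Fin.val_succ] at e1 e2
    rw [hij] at e2
    rw [e1, e2] at this
    simp only [Fin.succ_lt_succ_iff, Fin.rev_lt_rev] at this
    exact ⟨fun hi => this.2 (by omega), fun hi => this.1 (by omega)⟩
  · intro hud x hx
    have hx0 : x = 0 := by
      have : π.SameCycle x 0 := by
        obtain ⟨k, hk⟩ := hs x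
        exact Equiv.Perm.SameCycle.symm ⟨k, by simpa using hk⟩
      obtain ⟨k, hk⟩ := this.exists_nat_pow_eq
      have := hx k
      rw [hk] at this
      exact Fin.le_zero_iff.mp this
    subst hx0
    intro i hi
    rw [hc] at hi
    rcases i with _ | i
    · have e := h (Fin.succ ⟨0, by omega⟩)
      rw [hw] at e
      simp only [Fin.val_succ] at e
      refine ⟨fun _ => ?_, fun h => by omega⟩
      rw [e]
      simp
    · have := hud ⟨i, by omega⟩ ⟨i+1, by omega⟩ rfl
      have e1 := h (Fin.succ ⟨i, by omega⟩)
      have e2 := h (Fin.succ ⟨i+1, by omega⟩)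
      rw [hw] at e1 e2
      simp only [Fin.val_succ] at e1 e2
      rw [e1, e2]
      simp only [Fin.succ_lt_succ_iff, Fin.rev_lt_rev]
      exact ⟨fun hi => this.2 (by simp; omega), fun hi => this.1 (by simp; omega)⟩

def auxW {m : ℕ} (σ : Equiv.Perm (Fin m)) : Equiv.Perm (Fin (m+1)) :=
  Equiv.Perm.decomposeFin.symm (0, σ.trans Fin.revPerm)

theorem auxW_zero {m : ℕ} (σ : Equiv.Perm (Fin m)) : auxW σ 0 = 0 := by
  simp [auxW]

theorem auxW_succ {m : ℕ} (σ : Equiv.Perm (Fin m)) (i : Fin m) :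
    auxW σ i.succ = (Fin.rev (σ i)).succ := by
  simp [auxW]

theorem auxW_surj {m : ℕ} (w : Equiv.Perm (Fin (m+1))) (h : w 0 = 0) :
    ∃ σ, auxW σ = w := by
  obtain ⟨⟨p, e⟩, rfl⟩ := Equiv.Perm.decomposeFin.symm.surjective w
  rw [Equiv.Perm.decomposeFin_symm_apply_zero] at h
  subst h
  refine ⟨e.trans Fin.revPerm, ?_⟩
  unfold auxW
  congr 2
  ext i
  simp

def auxP {m : ℕ} (σ : Equiv.Perm (Fin m)) : Equiv.Perm (Fin (m+1)) :=
  auxW σ * finRotate (m+1) * (auxW σ)⁻¹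

theorem auxP_pow {m : ℕ} (σ : Equiv.Perm (Fin m)) (k : Fin (m+1)) :
    (auxP σ ^ (k:ℕ)) 0 = auxW σ k := by
  obtain ⟨k, hk⟩ := k
  induction k with
  | zero => exact (auxW_zero σ).symm
  | succ k ih =>
    have := ih (by omega)
    simp only at this ⊢
    rw [pow_succ', Equiv.Perm.mul_apply, this, auxP]
    rw [Equiv.Perm.mul_apply, Equiv.Perm.mul_apply, ← Equiv.Perm.mul_apply (auxW σ)⁻¹, inv_mul_cancel,
      Equiv.Perm.one_apply]
    rw [finRotate_of_lt (by omega)]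

theorem aux_exists {m : ℕ} (π : Equiv.Perm (Fin (m+1))) (hπ : IsCyclicPerm π) :
    ∃ σ, auxP σ = π := by
  have hsurj : Function.Surjective (fun k : Fin (m+1) => (π ^ (k:ℕ)) 0) := by
    intro y
    obtain ⟨k, hk⟩ := (hπ 0 y).exists_nat_pow_eq
    have hper : 0 ∈ Function.periodicPts (⇑π) := by
      rw [Function.mem_periodicPts]
      exact ⟨orderOf π, orderOf_pos π, by
        rw [Function.IsPeriodicPt, Function.IsFixedPt, ← Equiv.Perm.coe_pow, pow_orderOf_eq_one]; rfl⟩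
    have hpos := Function.minimalPeriod_pos_of_mem_periodicPts hper
    have hle : Function.minimalPeriod (⇑π) 0 ≤ m + 1 := by
      simpa using Function.minimalPeriod_le_card (f := ⇑π) (x := (0 : Fin (m+1)))
    have hm := Nat.mod_lt k hpos
    refine ⟨⟨k % Function.minimalPeriod (⇑π) 0, by omega⟩, ?_⟩
    simp only
    rw [Equiv.Perm.coe_pow, Function.iterate_mod_minimalPeriod_eq, ← Equiv.Perm.coe_pow, hk]
  let w : Equiv.Perm (Fin (m+1)) :=
    Equiv.ofBijective _ ⟨Finite.injective_iff_surjective.mpr hsurj, hsurj⟩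
  have hw : ∀ k : Fin (m+1), (π ^ (k:ℕ)) 0 = w k := fun k => rfl
  have hc := aux_cyc π w hw
  obtain ⟨σ, hσ⟩ := auxW_surj w (by simpa using (hw 0).symm)
  refine ⟨σ, ?_⟩
  unfold auxP
  rw [hσ, mul_inv_eq_iff_eq_mul]
  ext k : 1
  rw [Equiv.Perm.mul_apply, Equiv.Perm.mul_apply, ← hw, ← hw, ← Equiv.Perm.mul_apply, ← pow_succ']
  obtain ⟨k, hk⟩ := k
  rcases Nat.lt_or_ge k m with h | h
  · rw [finRotate_of_lt h]
  · obtain rfl : k = m := by omega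
    rw [finRotate_last']
    have h2 := Function.iterate_minimalPeriod (f := ⇑π) (x := (0 : Fin (k+1)))
    unfold cycLen at hc
    rw [hc, ← Equiv.Perm.coe_pow] at h2
    simp only
    rw [h2]; rfl

theorem auxP_inj {m : ℕ} : Function.Injective (auxP (m := m)) := by
  intro σ τ h
  ext i : 1
  have h1 := auxP_pow σ i.succ
  rw [h, auxP_pow τ, auxW_succ, auxW_succ] at h1
  simpa using h1.symm

/-- cyclic permutations of `[n]` whose cycle is up-down are counted by `E (n-1)`. -/
theorem stmt3 (n : ℕ) (hn : 1 ≤ n) :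
    Nat.card {π : Equiv.Perm (Fin n) // IsCyclicPerm π ∧ IsCUD π} = eulerE (n - 1) := by
  obtain ⟨m, rfl⟩ : ∃ m, n = m + 1 := ⟨n - 1, by omega⟩
  rw [Nat.add_sub_cancel, eulerE]
  symm
  have key := fun σ : Equiv.Perm (Fin m) => aux_iff (auxP σ) (auxW σ) σ (auxP_pow σ) (auxW_succ σ)
  refine Nat.card_eq_of_bijective
    (fun σ => ⟨auxP σ.1, (key σ.1).1, (key σ.1).2.2 σ.2⟩) ⟨?_, ?_⟩
  · intro σ τ h
    exact Subtype.ext (auxP_inj (congrArg Subtype.val h))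
  · rintro ⟨π, hπ, hc⟩
    obtain ⟨σ, rfl⟩ := aux_exists π hπ
    exact ⟨⟨σ, (key σ).2.1 hc⟩, rfl⟩
end

section
/- For every k ≥ 1, the number of up-down permutations π of [2k] satisfying π_{2k} > π_1 equals k · E_{2k-1}. -/
open Equiv Finset

def CycUD (q : ℕ) (π : Equiv.Perm (Fin (2 * q + 1 + 1))) : Prop :=
  ∀ i : Fin (2 * q + 1 + 1), ((i : ℕ) % 2 = 0 → π i < π (i + 1)) ∧
    ((i : ℕ) % 2 = 1 → π (i + 1) < π i)

theorem cyc_iff {q : ℕ} (π : Equiv.Perm (Fin (2 * q + 1 + 1))) :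
    (IsUpDownPerm π ∧ π ⟨0, by omega⟩ < π ⟨2 * q + 1, by omega⟩) ↔ CycUD q π := by
  have hl : (⟨2 * q + 1, by omega⟩ : Fin (2 * q + 1 + 1)) + 1 = ⟨0, by omega⟩ := by
    ext; simp [Fin.val_add]
  constructor
  · rintro ⟨h, h0⟩ i
    by_cases hi : (i : ℕ) = 2 * q + 1
    · have : i = ⟨2 * q + 1, by omega⟩ := Fin.ext hi
      rw [this, hl]
      refine ⟨fun h => ?_, fun _ => h0⟩
      simp only [] at h
      omega
    · refine h i (i + 1) ?_
      have := i.2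
      rw [Fin.val_add_one_of_lt]
      rw [Fin.lt_def, Fin.val_last]; omega
  · intro h
    refine ⟨?_, ?_⟩
    · intro i j hij
      have : j = i + 1 := by
        ext
        have := j.2
        rw [Fin.val_add_one_of_lt]
        · exact hij
        rw [Fin.lt_def, Fin.val_last]; omega
      subst this
      exact h i
    · have := (h ⟨2 * q + 1, by omega⟩).2 (by simp only []; omega)
      rwa [hl] at this

theorem rot_cyc {q : ℕ} {π : Equiv.Perm (Fin (2 * q + 1 + 1))} (h : CycUD q π)
    (c : Fin (2 * q + 1 + 1)) (hc : (c : ℕ) % 2 = 0) :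
    CycUD q ((Equiv.addRight c).trans π) := by
  intro i
  have h2 := h (i + c)
  have h3 : ((i + c : Fin (2 * q + 1 + 1)) : ℕ) % 2 = (i : ℕ) % 2 := by
    rw [Fin.val_add_eq_ite]
    split_ifs <;> omega
  rw [h3] at h2
  have h4 : i + c + 1 = i + 1 + c := by abel
  rw [h4] at h2
  simpa using h2

def extP {m : ℕ} (σ : Equiv.Perm (Fin m)) : Equiv.Perm (Fin (m + 1)) :=
  finSuccEquivLast.permCongr.symm (Equiv.optionCongr σ)

theorem extP_castSucc {m : ℕ} (σ : Equiv.Perm (Fin m)) (i : Fin m) :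
    extP σ i.castSucc = (σ i).castSucc := by
  simp [extP]

theorem extP_last {m : ℕ} (σ : Equiv.Perm (Fin m)) :
    extP σ (Fin.last m) = Fin.last m := by
  simp [extP]

theorem extP_cyc {q : ℕ} (σ : Equiv.Perm (Fin (2 * q + 1))) :
    CycUD q (extP σ) ↔ IsUpDownPerm σ := by
  rw [← cyc_iff]
  have e : (⟨2 * q + 1, by omega⟩ : Fin (2 * q + 1 + 1)) = Fin.last _ := rfl
  have e0 : (⟨0, by omega⟩ : Fin (2 * q + 1 + 1)) = Fin.castSucc ⟨0, by omega⟩ := rfl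
  rw [e, e0, extP_last, extP_castSucc]
  constructor
  · rintro ⟨h, -⟩ i j hij
    have := h i.castSucc j.castSucc hij
    simpa [extP_castSucc] using this
  · intro h
    refine ⟨?_, Fin.castSucc_lt_last _⟩
    intro i j hij
    induction i using Fin.lastCases with
    | last => have := j.2; simp at hij; omega
    | cast i =>
      induction j using Fin.lastCases with
      | last =>
        rw [extP_last, extP_castSucc]
        refine ⟨fun _ => Fin.castSucc_lt_last _, fun h => ?_⟩
        simp at hij h
        omega
      | cast j =>
        have := h i j hij
        simpa [extP_castSucc] using this

theorem extP_inj {m : ℕ} {σ τ : Equiv.Perm (Fin m)} (h : extP σ = extP τ) : σ = τ := by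
  ext i : 1
  have := congrArg (fun e => e i.castSucc) h
  simpa [extP_castSucc] using this

theorem extP_surj {m : ℕ} (π : Equiv.Perm (Fin (m + 1))) (h : π (Fin.last m) = Fin.last m) :
    ∃ σ, extP σ = π := by
  have hne : ∀ i : Fin m, π i.castSucc ≠ Fin.last m := by
    intro i hi
    rw [← h] at hi
    exact (Fin.castSucc_lt_last i).ne (π.injective hi)
  have hinj : Function.Injective (fun i : Fin m => (π i.castSucc).castPred (hne i)) := by
    intro i j hij
    simpa [Fin.castPred_inj] using hij
  refine ⟨Equiv.ofBijective _ (Finite.injective_iff_bijective.mp hinj), ?_⟩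
  ext i : 1
  induction i using Fin.lastCases with
  | last => rw [extP_last, h]
  | cast i => rw [extP_castSucc]; simp

def cst (q : ℕ) (j : Fin (q + 1)) : Fin (2 * q + 1 + 1) := ⟨2 * j, by omega⟩

def bigF (q : ℕ) (x : Fin (q + 1) × {σ : Equiv.Perm (Fin (2 * q + 1)) // IsUpDownPerm σ}) :
    {π : Equiv.Perm (Fin (2 * q + 1 + 1)) // CycUD q π} :=
  ⟨(Equiv.addRight (cst q x.1)).trans (extP x.2.1),
    rot_cyc ((extP_cyc _).2 x.2.2) _ (by simp [cst])⟩

theorem bigF_inj (q : ℕ) : Function.Injective (bigF q) := by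
  rintro ⟨j, σ, hσ⟩ ⟨j', τ, hτ⟩ h
  have h1 : ∀ i, extP σ (i + cst q j) = extP τ (i + cst q j') := by
    intro i
    have := congrArg (fun e => e.1 i) h
    simpa [bigF] using this
  have h2 := h1 (Fin.last _ - cst q j)
  rw [sub_add_cancel, extP_last] at h2
  replace h2 := (extP_last τ).trans h2
  have h3 := (extP τ).injective h2
  have h4 : cst q j = cst q j' := by
    rw [sub_add_eq_add_sub, eq_sub_iff_add_eq] at h3
    exact add_left_cancel h3
  have h5 : j = j' := by
    have := congrArg Fin.val h4
    simp [cst] at this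
    exact Fin.ext this
  subst h5
  have h6 : σ = τ := by
    apply extP_inj
    ext i : 1
    simpa using h1 (i - cst q j)
  subst h6
  rfl

theorem bigF_surj (q : ℕ) : Function.Surjective (bigF q) := by
  rintro ⟨π, hπ⟩
  obtain ⟨p, hp⟩ := π.surjective (Fin.last _)
  have hodd : (p : ℕ) % 2 = 1 := by
    by_contra hc
    have := (hπ p).1 (by omega)
    rw [hp] at this
    exact absurd this (Fin.le_last _).not_gt
  have hp2 := p.2
  have hc : cst q ⟨(2 * q + 1 - p) / 2, by omega⟩ + (p + 1) = 0 := by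
    have : cst q ⟨(2 * q + 1 - p) / 2, by omega⟩ + p = Fin.last _ := by
      ext
      rw [Fin.val_add_eq_ite]
      change (if 2 * q + 1 + 1 ≤ 2 * ((2 * q + 1 - (p : ℕ)) / 2) + (p : ℕ) then 2 * ((2 * q + 1 - (p : ℕ)) / 2) + (p : ℕ) - (2 * q + 1 + 1) else 2 * ((2 * q + 1 - (p : ℕ)) / 2) + (p : ℕ)) = 2 * q + 1
      rw [if_neg (by omega)]
      omega
    rw [← add_assoc, this, Fin.last_add_one]
  have hev : ((p + 1 : Fin (2 * q + 1 + 1)) : ℕ) % 2 = 0 := by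
    rw [Fin.val_add_one]
    split_ifs with hs
    · rfl
    · omega
  have hr := rot_cyc hπ (p + 1) hev
  obtain ⟨σ, hσ⟩ := extP_surj ((Equiv.addRight (p + 1)).trans π) (by
    have : Fin.last (2 * q + 1) + (p + 1) = p := by
      rw [add_comm p 1, ← add_assoc, Fin.last_add_one, zero_add]
    rw [Equiv.trans_apply, Equiv.coe_addRight]
    exact (congrArg π this).trans hp)
  refine ⟨(⟨(2 * q + 1 - p) / 2, by omega⟩, ⟨σ, (extP_cyc σ).1 (hσ ▸ hr)⟩), ?_⟩
  apply Subtype.ext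
  ext i : 1
  simp only [bigF, hσ, Equiv.trans_apply, Equiv.coe_addRight]
  refine congrArg π ?_
  refine (add_assoc i _ _).trans ?_
  rw [hc, add_zero]

/-- up-down permutations of `[2k]` with last entry larger than first. -/
theorem stmt4 (k : ℕ) (hk : 1 ≤ k) :
    Nat.card {π : Equiv.Perm (Fin (2 * k)) // IsUpDownPerm π ∧
      π ⟨0, by omega⟩ < π ⟨2 * k - 1, by omega⟩} = k * eulerE (2 * k - 1) := by
  obtain ⟨q, rfl⟩ : ∃ q, k = q + 1 := ⟨k - 1, by omega⟩
  change Nat.card {π : Equiv.Perm (Fin (2 * q + 1 + 1)) // IsUpDownPerm π ∧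
      π ⟨0, by omega⟩ < π ⟨2 * q + 1, by omega⟩} = (q + 1) * Nat.card {σ : Equiv.Perm (Fin (2 * q + 1)) // IsUpDownPerm σ}
  have h1 : ∀ π : Equiv.Perm (Fin (2 * q + 1 + 1)), (IsUpDownPerm π ∧
      π ⟨0, by omega⟩ < π ⟨2 * q + 1, by omega⟩) ↔ CycUD q π := cyc_iff
  rw [Nat.card_congr (Equiv.subtypeEquivRight h1),
    ← Nat.card_congr (Equiv.ofBijective (bigF q) ⟨bigF_inj q, bigF_surj q⟩), Nat.card_prod]
  simp
end

section
/- For every k ≥ 1, the number of up-down permutations π of [2k] satisfying π_{2k} < π_1 equals E_{2k} − k · E_{2k-1}. -/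
open Equiv Finset

/-- Cyclically alternating permutations of `[2m+2]`. -/
def CycAlt {m : ℕ} (π : Equiv.Perm (Fin (2 * m + 2))) : Prop :=
  ∀ i : Fin (2 * m + 2), ((i : ℕ) % 2 = 0 → π i < π (i + 1)) ∧ ((i : ℕ) % 2 = 1 → π (i + 1) < π i)

theorem cycAlt_iff {m : ℕ} (π : Equiv.Perm (Fin (2 * m + 2))) :
    CycAlt π ↔ (IsUpDownPerm π ∧ π 0 < π (Fin.last _)) := by
  constructor
  · intro h
    refine ⟨?_, ?_⟩
    · intro i j hij
      have : j = i + 1 := by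
        apply Fin.ext
        rw [Fin.val_add_one_of_lt' (by omega)]
        exact hij
      subst this
      exact h i
    · have := (h (Fin.last _)).2 (by simp only [Fin.val_last]; omega)
      rwa [Fin.last_add_one] at this
  · rintro ⟨h, h0⟩ i
    by_cases hi : i = Fin.last _
    · subst hi
      refine ⟨fun hh => ?_, fun _ => ?_⟩
      · simp only [Fin.val_last] at hh; omega
      · rwa [Fin.last_add_one]
    · have hlt : (i : ℕ) < 2 * m + 1 := by
        have := Fin.val_lt_last hi
        exact this
      exact h i (i + 1) (Fin.val_add_one_of_lt' (by omega))

theorem cycAlt_rot {m : ℕ} {π : Equiv.Perm (Fin (2 * m + 2))} (h : CycAlt π)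
    (c : Fin (2 * m + 2)) (hc : (c : ℕ) % 2 = 0) :
    CycAlt ((Equiv.addRight c).trans π) := by
  intro i
  have hp : ((i + c : Fin (2 * m + 2)) : ℕ) % 2 = (i : ℕ) % 2 := by
    rw [Fin.val_add, Nat.mod_mod_of_dvd _ (by omega)]
    omega
  have := h (i + c)
  rw [hp] at this
  simpa [add_right_comm] using this

theorem card_cycAlt (m : ℕ) :
    Nat.card {π : Equiv.Perm (Fin (2 * m + 2)) // CycAlt π} =
      (m + 1) * Nat.card {π : Equiv.Perm (Fin (2 * m + 2)) //
        CycAlt π ∧ π (Fin.last _) = Fin.last _} := by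
  -- position of the maximum is odd
  have hodd : ∀ π : Equiv.Perm (Fin (2 * m + 2)), CycAlt π →
      (π.symm (Fin.last _) : ℕ) % 2 = 1 := by
    intro π h
    by_contra hne
    have := (h (π.symm (Fin.last _))).1 (by omega)
    rw [Equiv.apply_symm_apply] at this
    exact absurd (Fin.le_last _) (not_le.mpr this)
  let s : Fin (m + 1) → Fin (2 * m + 2) := fun j => ⟨2 * j + 1, by omega⟩
  let f : Fin (m + 1) × {π : Equiv.Perm (Fin (2 * m + 2)) //
        CycAlt π ∧ π (Fin.last _) = Fin.last _} →
      {π : Equiv.Perm (Fin (2 * m + 2)) // CycAlt π} := fun p =>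
    ⟨(Equiv.addRight (Fin.last _ - s p.1)).trans p.2.1, cycAlt_rot p.2.2.1 _ (by
      rw [Fin.sub_val_of_le (Fin.le_last _)]
      simp only [s, Fin.val_last]; omega)⟩
  have hf : ∀ p, (f p).1 (s p.1) = Fin.last _ := by
    intro p
    simp [f, p.2.2.2]
  have hbij : Function.Bijective f := by
    constructor
    · intro p q hpq
      have h1 : p.1 = q.1 := by
        have h2 := hf p
        rw [hpq] at h2
        have h3 := (f q).1.injective (h2.trans (hf q).symm)
        have h4 := congrArg Fin.val h3
        simp only [s] at h4
        apply Fin.ext; omega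
      obtain ⟨a, σ, hσ⟩ := p
      obtain ⟨b, τ, hτ⟩ := q
      simp only at h1
      subst h1
      have h5 := congrArg Subtype.val hpq
      simp only [f] at h5
      have : σ = τ := by
        ext x : 1
        have := congrArg (fun e : Equiv.Perm (Fin (2 * m + 2)) => e (x - (Fin.last _ - s a))) h5
        simpa using this
      subst this
      rfl
    · rintro ⟨π, hπ⟩
      have ho := hodd π hπ
      have hlt := (π.symm (Fin.last _)).isLt
      let j : Fin (m + 1) := ⟨(π.symm (Fin.last _) : ℕ) / 2, by omega⟩
      have hs : s j = π.symm (Fin.last _) := by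
        apply Fin.ext
        simp only [s, j]; omega
      have hc : ((s j + 1 : Fin (2 * m + 2)) : ℕ) % 2 = 0 := by
        rw [Fin.val_add, Nat.mod_mod_of_dvd _ (by omega)]
        rw [Fin.val_one]
        simp only [s]; omega
      refine ⟨(j, ⟨(Equiv.addRight (s j + 1)).trans π, cycAlt_rot hπ _ hc, ?_⟩), ?_⟩
      · have : Fin.last (2 * m + 1) + (s j + 1) = s j := by
          calc Fin.last (2 * m + 1) + (s j + 1) = s j + (Fin.last (2 * m + 1) + 1) := by abel
            _ = s j := by rw [Fin.last_add_one (2 * m + 1), add_zero]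
        simp only [Equiv.trans_apply, Equiv.coe_addRight, this]
        rw [hs, Equiv.apply_symm_apply]
      · apply Subtype.ext
        ext x : 1
        have : x + (Fin.last (2 * m + 1) - s j) + (s j + 1) = x := by
          have h6 := Fin.last_add_one (2 * m + 1)
          calc x + (Fin.last (2 * m + 1) - s j) + (s j + 1) = x + (Fin.last (2 * m + 1) + 1) := by abel
            _ = x := by rw [h6, add_zero]
        simp only [f, Equiv.trans_apply, Equiv.coe_addRight, this]
  rw [← Nat.card_congr (Equiv.ofBijective f hbij), Nat.card_prod, Nat.card_fin]

theorem card_cycAlt_last (m : ℕ) :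
    Nat.card {π : Equiv.Perm (Fin (2 * m + 2)) // CycAlt π ∧ π (Fin.last _) = Fin.last _} =
      eulerE (2 * m + 1) := by
  let g : Equiv.Perm (Fin (2 * m + 1)) → Equiv.Perm (Fin (2 * m + 2)) := fun σ =>
    (finSuccEquivLast.trans (Equiv.optionCongr σ)).trans finSuccEquivLast.symm
  have g1 : ∀ σ i, g σ (Fin.castSucc i) = Fin.castSucc (σ i) := by
    intro σ i; simp [g]
  have g2 : ∀ σ, g σ (Fin.last _) = Fin.last _ := by
    intro σ; simp [g]
  have key : ∀ σ, CycAlt (g σ) ↔ IsUpDownPerm σ := by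
    intro σ
    rw [cycAlt_iff]
    constructor
    · rintro ⟨h, -⟩ i j hij
      have := h i.castSucc j.castSucc (by simpa using hij)
      simpa [g1] using this
    · intro h
      refine ⟨?_, ?_⟩
      · intro i j hij
        induction i using Fin.lastCases with
        | last => have := j.isLt; simp only [Fin.val_last] at hij; omega
        | cast i =>
          induction j using Fin.lastCases with
          | last =>
            rw [g1, g2]
            simp only [Fin.val_last, Fin.val_castSucc] at hij ⊢
            exact ⟨fun _ => Fin.castSucc_lt_last _, fun _ => by omega⟩
          | cast j =>
            have := h i j (by simpa using hij)
            simpa [g1] using this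
      · rw [g2, ← Fin.castSucc_zero, g1]
        exact Fin.castSucc_lt_last _
  symm
  unfold eulerE
  refine Nat.card_congr (Equiv.ofBijective
    (fun σ => ⟨g σ.1, (key σ.1).2 σ.2, g2 σ.1⟩) ⟨?_, ?_⟩)
  · rintro ⟨σ, hσ⟩ ⟨τ, hτ⟩ h
    have h' : g σ = g τ := congrArg Subtype.val h
    apply Subtype.ext
    ext x : 1
    have := congrArg (fun e : Equiv.Perm (Fin (2 * m + 2)) => e x.castSucc) h'
    simpa [g1] using this
  · rintro ⟨π, hπ, hl⟩
    have hne : ∀ i : Fin (2 * m + 1), π i.castSucc ≠ Fin.last _ := by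
      intro i h
      rw [← hl] at h
      exact (Fin.castSucc_lt_last i).ne (π.injective h)
    let σ0 : Fin (2 * m + 1) → Fin (2 * m + 1) := fun i => (π i.castSucc).castPred (hne i)
    have hinj : Function.Injective σ0 := by
      intro a b h
      have := congrArg Fin.castSucc h
      simpa [σ0] using this
    let σ : Equiv.Perm (Fin (2 * m + 1)) := Equiv.ofBijective σ0 (Finite.injective_iff_bijective.1 hinj)
    have hg : g σ = π := by
      ext x : 1
      induction x using Fin.lastCases with
      | last => rw [g2, hl]
      | cast i => rw [g1]; simp [σ, σ0]
    refine ⟨⟨σ, (key σ).1 (by rw [hg]; exact hπ)⟩, ?_⟩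
    apply Subtype.ext
    exact hg

theorem stmt5_aux (m : ℕ) :
    Nat.card {π : Equiv.Perm (Fin (2 * m + 2)) // IsUpDownPerm π ∧ π (Fin.last _) < π 0}
      + (m + 1) * eulerE (2 * m + 1) = eulerE (2 * m + 2) := by
  classical
  rw [← card_cycAlt_last, ← card_cycAlt]
  unfold eulerE
  simp only [Nat.card_eq_fintype_card, Fintype.card_subtype]
  rw [← Finset.card_union_of_disjoint]
  · congr 1
    ext π
    have hne : π (Fin.last (2 * m + 1)) ≠ π 0 := fun h => by
      have := congrArg Fin.val (π.injective h)
      simp at this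
    simp only [Finset.mem_union, Finset.mem_filter, Finset.mem_univ, true_and, cycAlt_iff]
    rcases lt_or_gt_of_ne hne with h | h <;> simp [h] <;> tauto
  · rw [Finset.disjoint_left]
    intro π h1 h2
    simp only [Finset.mem_filter, Finset.mem_univ, true_and, cycAlt_iff] at h1 h2
    exact lt_asymm h1.2 h2.2

/-- up-down permutations of `[2k]` with last entry smaller than first. -/
theorem stmt5 (k : ℕ) (hk : 1 ≤ k) :
    (Nat.card {π : Equiv.Perm (Fin (2 * k)) // IsUpDownPerm π ∧
      π ⟨2 * k - 1, by omega⟩ < π ⟨0, by omega⟩} : ℤ) =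
      eulerE (2 * k) - k * eulerE (2 * k - 1) := by
  obtain ⟨m, rfl⟩ : ∃ m, k = m + 1 := ⟨k - 1, by omega⟩
  have h := stmt5_aux m
  rw [eq_sub_iff_add_eq]
  exact_mod_cast h
end

section
/- For every k ≥ 0, the number of cyclic permutations of [2k+1] whose unique cycle is generalized up-down equals E_{2k+1}, the number of up-down permutations of [2k+1]. (Equivalently, a generalized up-down cycle of odd length admits a unique up-down representation.) -/
open Equiv Finset

section helper

/-- the cycle whose cyclic representation is the one-line notation of `σ` -/
def toCyc {n : ℕ} [NeZero n] (σ : Equiv.Perm (Fin n)) : Equiv.Perm (Fin n) :=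
  (σ.symm.trans (Equiv.addRight (1 : Fin n))).trans σ

theorem toCyc_apply {n : ℕ} [NeZero n] (σ : Equiv.Perm (Fin n)) (x : Fin n) :
    toCyc σ (σ x) = σ (x + 1) := by
  simp [toCyc]

theorem ofNat_succ_aux {n : ℕ} [NeZero n] (i : ℕ) :
    Fin.ofNat n i + 1 = Fin.ofNat n (i + 1) := by
  apply Fin.ext
  simp [Fin.val_add, Fin.val_one', Fin.ofNat]

theorem toCyc_pow {n : ℕ} [NeZero n] (σ : Equiv.Perm (Fin n)) (i : ℕ) :
    (toCyc σ ^ i) (σ 0) = σ (Fin.ofNat n i) := by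
  induction i with
  | zero => simp
  | succ i ih =>
    rw [pow_succ', Equiv.Perm.mul_apply, ih, toCyc_apply, ofNat_succ_aux]

theorem toCyc_cyclic {n : ℕ} [NeZero n] (σ : Equiv.Perm (Fin n)) :
    IsCyclicPerm (toCyc σ) := by
  have h : ∀ x, (toCyc σ).SameCycle (σ 0) x := by
    intro x
    refine ⟨((σ.symm x : Fin n) : ℕ), ?_⟩
    rw [zpow_natCast, toCyc_pow]
    simp
  intro x y
  exact (h x).symm.trans (h y)

theorem toCyc_cycLen_le {n : ℕ} [NeZero n] (σ : Equiv.Perm (Fin n)) :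
    cycLen (toCyc σ) (σ 0) ≤ n := by
  apply Function.IsPeriodicPt.minimalPeriod_le (NeZero.pos n)
  change (⇑(toCyc σ))^[n] (σ 0) = σ 0
  rw [Equiv.Perm.iterate_eq_pow, toCyc_pow]
  congr 1
  apply Fin.ext
  simp [Fin.ofNat]

theorem toCyc_ud {n : ℕ} [NeZero n] (σ : Equiv.Perm (Fin n)) (h : IsUpDownPerm σ) :
    CycleUpDownAt (toCyc σ) (σ 0) := by
  intro i hi
  have hn := lt_of_lt_of_le hi (toCyc_cycLen_le σ)
  rw [toCyc_pow, toCyc_pow]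
  have e1 : ((Fin.ofNat n i : Fin n) : ℕ) = i := Nat.mod_eq_of_lt (by omega)
  have e2 : ((Fin.ofNat n (i+1) : Fin n) : ℕ) = i + 1 := Nat.mod_eq_of_lt (by omega)
  have := h (Fin.ofNat n i) (Fin.ofNat n (i+1)) (by rw [e1, e2])
  rwa [e1] at this

theorem toCyc_inj (k : ℕ) (σ τ : Equiv.Perm (Fin (2 * k + 1))) (hσ : IsUpDownPerm σ)
    (hτ : IsUpDownPerm τ) (h : toCyc σ = toCyc τ) : σ = τ := by
  obtain ⟨m, hm⟩ := τ.surjective (σ 0)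
  have key : ∀ i, σ (Fin.ofNat _ i) = τ (Fin.ofNat _ (i + m)) := by
    intro i
    rw [← toCyc_pow, ← toCyc_pow, pow_add, Equiv.Perm.mul_apply, toCyc_pow τ m, h]
    simp [hm]
  have hmlt := m.isLt
  have ud : ∀ ρ : Equiv.Perm (Fin (2 * k + 1)), IsUpDownPerm ρ → ∀ i, i + 1 < 2 * k + 1 →
      (i % 2 = 0 → ρ (Fin.ofNat _ i) < ρ (Fin.ofNat _ (i+1))) ∧
      (i % 2 = 1 → ρ (Fin.ofNat _ (i+1)) < ρ (Fin.ofNat _ i)) := by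
    intro ρ hρ i hn
    have e1 : ((Fin.ofNat (2*k+1) i) : ℕ) = i := Nat.mod_eq_of_lt (by omega)
    have e2 : ((Fin.ofNat (2*k+1) (i+1)) : ℕ) = i + 1 := Nat.mod_eq_of_lt (by omega)
    have := hρ (Fin.ofNat _ i) (Fin.ofNat _ (i+1)) (by rw [e1, e2])
    rwa [e1] at this
  by_cases h0 : (m : ℕ) = 0
  · ext1 x
    have := key x
    simpa [h0] using this
  exfalso
  rcases Nat.mod_two_eq_zero_or_one (m : ℕ) with he | ho
  · have h1 := (ud σ hσ (2 * k + 1 - m) (by omega)).2 (by omega)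
    have h2 := (ud τ hτ 0 (by omega)).1 rfl
    rw [key, key] at h1
    have a1 : Fin.ofNat (2*k+1) (2 * k + 1 - m + m) = Fin.ofNat _ 0 := by
      apply Fin.ext
      rw [Nat.sub_add_cancel hmlt.le]
      simp [Fin.ofNat]
    have a2 : Fin.ofNat (2*k+1) (2 * k + 1 - m + 1 + m) = Fin.ofNat _ (0 + 1) := by
      apply Fin.ext
      rw [show 2 * k + 1 - (m : ℕ) + 1 + m = (0 + 1) + (2 * k + 1) by omega]
      simp only [Fin.ofNat, Nat.add_mod_right]
    rw [a1, a2] at h1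
    exact lt_asymm h1 h2
  · have h1 := (ud σ hσ 0 (by omega)).1 rfl
    have h2 := (ud τ hτ m (by omega)).2 ho
    rw [key, key, show 0 + 1 + (m : ℕ) = m + 1 by omega, Nat.zero_add] at h1
    exact lt_asymm h1 h2

theorem toCyc_surj {n : ℕ} [NeZero n] (π : Equiv.Perm (Fin n)) (hc : IsCyclicPerm π)
    (a : Fin n) (ha : CycleUpDownAt π a) : ∃ σ, IsUpDownPerm σ ∧ toCyc σ = π := by
  have hp : 0 < Function.minimalPeriod π a :=
    Function.minimalPeriod_pos_of_mem_periodicPts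
      (Function.Injective.mem_periodicPts π.injective a)
  have hbij : Function.Bijective
      (fun i : Fin (Function.minimalPeriod π a) => (π ^ (i : ℕ)) a) := by
    constructor
    · intro i j hij
      apply Fin.ext
      apply Function.iterate_injOn_Iio_minimalPeriod (f := π) (x := a) i.isLt j.isLt
      simpa [Equiv.Perm.iterate_eq_pow] using hij
    · intro y
      obtain ⟨i, hi⟩ := (hc a y).exists_nat_pow_eq
      refine ⟨⟨i % Function.minimalPeriod π a, Nat.mod_lt _ hp⟩, ?_⟩
      simp only [← hi, ← Equiv.Perm.iterate_eq_pow]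
      exact Function.iterate_mod_minimalPeriod_eq
  have hn : Function.minimalPeriod π a = n := by
    simpa using Fintype.card_of_bijective hbij
  have hb2 : Function.Bijective (fun i : Fin n => (π ^ (i : ℕ)) a) := by
    rw [hn] at hbij
    exact hbij
  refine ⟨Equiv.ofBijective _ hb2, ?_, ?_⟩
  · intro i j hij
    have := ha i (by unfold cycLen; omega)
    simpa [hij] using this
  · ext1 x
    obtain ⟨i, rfl⟩ := (Equiv.ofBijective _ hb2).surjective x
    rw [toCyc_apply]
    simp only [Equiv.ofBijective_apply]
    rw [← Equiv.Perm.mul_apply, ← pow_succ', ← Equiv.Perm.iterate_eq_pow,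
      ← Equiv.Perm.iterate_eq_pow, ← Function.iterate_mod_minimalPeriod_eq (n := (i : ℕ) + 1), hn]
    congr 2
    simp [Fin.val_add, Fin.val_one']

end helper

/-- cyclic permutations of `[2k+1]` with a generalized up-down cycle. -/
theorem stmt6 (k : ℕ) :
    Nat.card {π : Equiv.Perm (Fin (2 * k + 1)) //
      IsCyclicPerm π ∧ ∃ a : Fin (2 * k + 1), CycleUpDownAt π a} =
      eulerE (2 * k + 1) := by
  symm
  refine Nat.card_eq_of_bijective
    (fun σ : {σ : Equiv.Perm (Fin (2 * k + 1)) // IsUpDownPerm σ} =>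
      ⟨toCyc σ.1, toCyc_cyclic σ.1, σ.1 0, toCyc_ud σ.1 σ.2⟩) ⟨?_, ?_⟩
  · intro σ τ h
    exact Subtype.ext (toCyc_inj k σ.1 τ.1 σ.2 τ.2 (congrArg Subtype.val h))
  · rintro ⟨π, hc, a, ha⟩
    obtain ⟨σ, hσ, h⟩ := toCyc_surj π hc a ha
    exact ⟨⟨σ, hσ⟩, Subtype.ext h⟩
end
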